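/- arXiv:1106.1840 — 2 statements merged into one kernel-verified Lean document; each statement's English description precedes it below -/
import Mathlib

section
/- For every n ≥ 4, if a polytope P realizes the type D_n model, then P is not combinatorially equivalent to the nestohedron P_B of any connected building set B on any ground set [m]. (That is, generalized associahedra of type D_n are not nestohedra for n ≥ 4.) -/
open Pointwise

namespace GalD

/-- A polytope in `ℝ^d`: the convex hull of a finite set of points. -/
def IsPolytope {d : ℕ} (P : Set (Fin d → ℝ)) : Prop :=
  ∃ V : Finset (Fin d → ℝ), P = convexHull ℝ (V : Set (Fin d → ℝ))

/-- A face of `P`: a nonempty exposed face of `P` (`P` itself included). -/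
def IsFaceOf {d : ℕ} (F P : Set (Fin d → ℝ)) : Prop :=
  F.Nonempty ∧ IsExposed ℝ P F

/-- The dimension of a set: the rank of the direction of its affine span. -/
noncomputable def polyDim {d : ℕ} (P : Set (Fin d → ℝ)) : ℕ :=
  Module.finrank ℝ (affineSpan ℝ P).direction

/-- A facet: a face of dimension `dim P - 1`. -/
def IsFacetOf {d : ℕ} (F P : Set (Fin d → ℝ)) : Prop :=
  IsFaceOf F P ∧ polyDim F + 1 = polyDim P

/-- A vertex: a point spanning a face of dimension 0. -/
def IsVertexOf {d : ℕ} (v : Fin d → ℝ) (P : Set (Fin d → ℝ)) : Prop :=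
  IsFaceOf {v} P

/-- A simple polytope: every vertex is contained in exactly `dim P` facets. -/
def IsSimplePolytope {d : ℕ} (P : Set (Fin d → ℝ)) : Prop :=
  IsPolytope P ∧ ∀ v, IsVertexOf v P →
    {F : Set (Fin d → ℝ) | IsFacetOf F P ∧ v ∈ F}.ncard = polyDim P

/-- A flag polytope: simple, and every collection of pairwise intersecting facets
has a nonempty common intersection. -/
def IsFlagPolytope {d : ℕ} (P : Set (Fin d → ℝ)) : Prop :=
  IsSimplePolytope P ∧
  ∀ 𝒮 : Set (Set (Fin d → ℝ)), 𝒮.Nonempty → (∀ F ∈ 𝒮, IsFacetOf F P) →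
    (∀ F ∈ 𝒮, ∀ G ∈ 𝒮, (F ∩ G).Nonempty) → (⋂₀ 𝒮).Nonempty

/-- Combinatorial equivalence: an order isomorphism between the face posets. -/
def CombEquiv {d₁ d₂ : ℕ} (P : Set (Fin d₁ → ℝ)) (Q : Set (Fin d₂ → ℝ)) : Prop :=
  Nonempty ({F : Set (Fin d₁ → ℝ) // IsFaceOf F P} ≃o
            {G : Set (Fin d₂ → ℝ) // IsFaceOf G Q})

/-- The product of a set in `ℝ^{d₁}` and a set in `ℝ^{d₂}`, inside `ℝ^{d₁+d₂}`. -/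
def polyProd {d₁ d₂ : ℕ} (Q : Set (Fin d₁ → ℝ)) (R : Set (Fin d₂ → ℝ)) :
    Set (Fin (d₁ + d₂) → ℝ) :=
  {x | (fun i => x (Fin.castAdd d₂ i)) ∈ Q ∧ (fun j => x (Fin.natAdd d₁ j)) ∈ R}

/-- `P` is not combinatorially equivalent to a nontrivial product of two polytopes. -/
def Indecomposable {d : ℕ} (P : Set (Fin d → ℝ)) : Prop :=
  ¬ ∃ (d₁ d₂ : ℕ) (Q : Set (Fin d₁ → ℝ)) (R : Set (Fin d₂ → ℝ)),
    IsPolytope Q ∧ IsPolytope R ∧ 1 ≤ polyDim Q ∧ 1 ≤ polyDim R ∧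
    CombEquiv P (polyProd Q R)

/-- A building set on the ground set `V`. -/
structure IsBuildingSetOn {m : ℕ} (V : Finset (Fin m)) (B : Finset (Finset (Fin m))) :
    Prop where
  subset_ground : ∀ S ∈ B, S ⊆ V
  nonempty_mem : ∀ S ∈ B, S.Nonempty
  singleton_mem : ∀ i ∈ V, ({i} : Finset (Fin m)) ∈ B
  ground_mem : V ∈ B
  union_mem : ∀ S₁ ∈ B, ∀ S₂ ∈ B, (S₁ ∩ S₂).Nonempty → S₁ ∪ S₂ ∈ B

/-- A connected building set on `[m]`. -/
def IsConnectedBuildingSet (m : ℕ) (B : Finset (Finset (Fin m))) : Prop :=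
  IsBuildingSetOn (Finset.univ : Finset (Fin m)) B

/-- The nestohedron `P_B`: the Minkowski sum of the simplices `Δ_S`, `S ∈ B`. -/
noncomputable def nestohedron (m : ℕ) (B : Finset (Finset (Fin m))) :
    Set (Fin m → ℝ) :=
  ∑ S ∈ B, convexHull ℝ ((fun i => (Pi.single i 1 : Fin m → ℝ)) '' (S : Set (Fin m)))

/-- A diagonal of a convex `N`-gon with vertices labelled by `ZMod N`. -/
def IsDiag (N : ℕ) (e : Finset (ZMod N)) : Prop :=
  ∃ a b : ZMod N, e = {a, b} ∧ b ≠ a ∧ b ≠ a + 1 ∧ b ≠ a - 1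

/-- `c` lies strictly between `a` and `b` on the arc from `a` to `b` (counterclockwise). -/
def StrictBtw (N : ℕ) (a c b : ZMod N) : Prop :=
  0 < (c - a).val ∧ (c - a).val < (b - a).val

/-- Two diagonals cross: their endpoints alternate around the circle. -/
def Crosses (N : ℕ) (e f : Finset (ZMod N)) : Prop :=
  ∃ a b c d : ZMod N, e = {a, b} ∧ f = {c, d} ∧
    StrictBtw N a c b ∧ StrictBtw N b d a

/-- Image of a diagonal under the central symmetry `a ↦ a + n` of the `2n`-gon. -/
def centralSym (n : ℕ) (e : Finset (ZMod (2 * n))) : Finset (ZMod (2 * n)) :=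
  e.image (· + (n : ZMod (2 * n)))

/-- A diameter of the `2n`-gon: a diagonal `{a, a + n}`. -/
def IsDiameter (n : ℕ) (e : Finset (ZMod (2 * n))) : Prop :=
  ∃ a : ZMod (2 * n), e = {a, a + (n : ZMod (2 * n))}

/-- Raw elements of the type `D_n` model: symmetric pairs of diagonals,
red diameters and blue diameters. -/
inductive DElem (n : ℕ) where
  | pair : Finset (Finset (ZMod (2 * n))) → DElem n
  | red  : Finset (ZMod (2 * n)) → DElem n
  | blue : Finset (ZMod (2 * n)) → DElem n

/-- Membership in the set `M_n` of the type `D_n` model. -/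
def memM (n : ℕ) : DElem n → Prop
  | .pair s => ∃ e, IsDiag (2 * n) e ∧ ¬ IsDiameter n e ∧ s = {e, centralSym n e}
  | .red e => IsDiag (2 * n) e ∧ IsDiameter n e
  | .blue e => IsDiag (2 * n) e ∧ IsDiameter n e

/-- Compatibility of elements of the type `D_n` model. -/
def DCompat (n : ℕ) : DElem n → DElem n → Prop
  | .pair s, .pair t => ∀ e ∈ s, ∀ f ∈ t, ¬ Crosses (2 * n) e f
  | .pair s, .red e => ∀ f ∈ s, ¬ Crosses (2 * n) e f
  | .pair s, .blue e => ∀ f ∈ s, ¬ Crosses (2 * n) e f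
  | .red e, .pair s => ∀ f ∈ s, ¬ Crosses (2 * n) e f
  | .blue e, .pair s => ∀ f ∈ s, ¬ Crosses (2 * n) e f
  | .red _, .red _ => True
  | .blue _, .blue _ => True
  | .red e, .blue f => e = f
  | .blue e, .red f => e = f

/-- The set `M_n` of the type `D_n` model, as a type. -/
def MSet (n : ℕ) := {x : DElem n // memM n x}

/-- `P` realizes the type `D_n` model via the bijection `φ`. -/
def RealizesDWith (n : ℕ) {d : ℕ} (P : Set (Fin d → ℝ))
    (φ : MSet n → Set (Fin d → ℝ)) : Prop :=
  IsPolytope P ∧ IsFlagPolytope P ∧ polyDim P = n ∧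
  (∀ x, IsFacetOf (φ x) P) ∧ Function.Injective φ ∧
  (∀ F, IsFacetOf F P → ∃ x, φ x = F) ∧
  ∀ x y : MSet n, x ≠ y → ((φ x ∩ φ y).Nonempty ↔ DCompat n x.1 y.1)

/-- `P` realizes the type `D_n` model. -/
def RealizesD (n : ℕ) {d : ℕ} (P : Set (Fin d → ℝ)) : Prop :=
  ∃ φ, RealizesDWith n P φ

/-- Elements of the type `A_k` model: diagonals of a convex `(k+3)`-gon. -/
def ASet (k : ℕ) := {e : Finset (ZMod (k + 3)) // IsDiag (k + 3) e}

/-- `P` realizes the type `A_k` model via the bijection `φ`. -/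
def RealizesAWith (k : ℕ) {d : ℕ} (P : Set (Fin d → ℝ))
    (φ : ASet k → Set (Fin d → ℝ)) : Prop :=
  IsPolytope P ∧ IsFlagPolytope P ∧ polyDim P = k ∧
  (∀ x, IsFacetOf (φ x) P) ∧ Function.Injective φ ∧
  (∀ F, IsFacetOf F P → ∃ x, φ x = F) ∧
  ∀ x y : ASet k, x ≠ y → ((φ x ∩ φ y).Nonempty ↔ ¬ Crosses (k + 3) x.1 y.1)

/-- `P` realizes the type `A_k` model. -/
def RealizesA (k : ℕ) {d : ℕ} (P : Set (Fin d → ℝ)) : Prop :=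
  ∃ φ, RealizesAWith k P φ

/-- A closed halfspace in `ℝ^d`. -/
def IsClosedHalfspace {d : ℕ} (H : Set (Fin d → ℝ)) : Prop :=
  ∃ (l : (Fin d → ℝ) →ₗ[ℝ] ℝ) (c : ℝ), l ≠ 0 ∧ H = {x | l x ≤ c}

/-- `P'` is obtained from `P` by shaving off a face of codimension 2. -/
def ObtainedByShaving {d : ℕ} (P P' : Set (Fin d → ℝ)) : Prop :=
  ∃ G H : Set (Fin d → ℝ), IsFaceOf G P ∧ polyDim G + 2 = polyDim P ∧
    IsClosedHalfspace H ∧ G ∩ H = ∅ ∧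
    (∀ v, IsVertexOf v P → v ∉ G → v ∈ interior H) ∧ P' = P ∩ H

/-- The restriction `B|_S` of a building set. -/
def restrictBS {m : ℕ} (B : Finset (Finset (Fin m))) (S : Finset (Fin m)) :
    Finset (Finset (Fin m)) :=
  B.filter (· ⊆ S)

/-- The contraction `B / S` of a building set. -/
def contractBS {m : ℕ} (B : Finset (Finset (Fin m))) (S : Finset (Fin m)) :
    Finset (Finset (Fin m)) :=
  (B.filter (fun S'' => ¬ S'' ⊆ S)).image (fun S'' => S'' \ S)

/-- The subset of the nestohedron `P_B` on which `x ↦ ∑_{i ∈ S} x i` is minimized. -/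
def minFace (m : ℕ) (B : Finset (Finset (Fin m))) (S : Finset (Fin m)) :
    Set (Fin m → ℝ) :=
  {x ∈ nestohedron m B | ∀ y ∈ nestohedron m B, ∑ i ∈ S, x i ≤ ∑ i ∈ S, y i}


/-! ### Combinatorics of nested sets -/

/-- Pairwise nested compatibility of two elements of a building set. -/
def Comp {m : ℕ} (B : Finset (Finset (Fin m))) (S T : Finset (Fin m)) : Prop :=
  S ⊆ T ∨ T ⊆ S ∨ (Disjoint S T ∧ S ∪ T ∉ B)

theorem Comp.symm {m : ℕ} {B : Finset (Finset (Fin m))} {S T : Finset (Fin m)}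
    (h : Comp B S T) : Comp B T S := by
  rcases h with h | h | ⟨h, h'⟩
  · exact Or.inr (Or.inl h)
  · exact Or.inl h
  · exact Or.inr (Or.inr ⟨h.symm, by rwa [Finset.union_comm]⟩)

/-- Elements inside `S` are compatible with elements of the link of `S` not inside `S`. -/
theorem comp_of_link {m : ℕ} {B : Finset (Finset (Fin m))} (hB : IsConnectedBuildingSet m B)
    {S T U : Finset (Fin m)} (hS : S ∈ B) (hT : T ∈ B) (hTS : T ⊆ S) (hU : Comp B U S)
    (hUS : ¬ U ⊆ S) : Comp B T U := by
  rcases hU with h | h | ⟨h, h'⟩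
  · exact absurd h hUS
  · exact Or.inl (hTS.trans h)
  · refine Or.inr (Or.inr ⟨(h.mono_right hTS).symm, fun hTU => h' ?_⟩)
    have h1 := hB.union_mem _ hTU _ hS (by
      obtain ⟨i, hi⟩ := hB.nonempty_mem _ hT
      exact ⟨i, by simp [hi, hTS hi]⟩)
    have : T ∪ U ∪ S = U ∪ S := by
      ext i; simp only [Finset.mem_union]
      constructor
      · rintro ((h | h) | h)
        · exact Or.inr (hTS h)
        · exact Or.inl h
        · exact Or.inr h
      · tauto
    rwa [this] at h1

/-- Abstract data extracted from the type `D` model and a facet labelling by a building set. -/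
structure ModelData {m : ℕ} (B : Finset (Finset (Fin m))) (X D : Type) where
  σ : X → Finset (Fin m)
  R : D → X
  L : D → X
  mem : ∀ x, σ x ∈ B
  ne_univ : ∀ x, σ x ≠ Finset.univ
  inj : Function.Injective σ
  surj : ∀ S ∈ B, S ≠ Finset.univ → ∃ x, σ x = S
  Rinj : Function.Injective R
  Linj : Function.Injective L
  RL : ∀ a c, R a ≠ L c
  compR : ∀ a c, Comp B (σ (R a)) (σ (R c))
  compL : ∀ a c, Comp B (σ (L a)) (σ (L c))
  compRL : ∀ a c, Comp B (σ (R a)) (σ (L c)) ↔ a = c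
  cases : ∀ x, (∃ a, x = R a) ∨ (∃ a, x = L a) ∨
    ((∀ a, Comp B (σ x) (σ (R a)) ↔ Comp B (σ x) (σ (L a))) ∧ ∃ a, ¬ Comp B (σ x) (σ (R a)))

/-- Exchange the two colours. -/
def ModelData.swap {m : ℕ} {B : Finset (Finset (Fin m))} {X D : Type} (M : ModelData B X D) :
    ModelData B X D where
  σ := M.σ
  R := M.L
  L := M.R
  mem := M.mem
  ne_univ := M.ne_univ
  inj := M.inj
  surj := M.surj
  Rinj := M.Linj
  Linj := M.Rinj
  RL := fun a c => (M.RL c a).symm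
  compR := M.compL
  compL := M.compR
  compRL := fun a c => by
    constructor
    · intro h; exact ((M.compRL c a).1 h.symm).symm
    · intro h; exact ((M.compRL c a).2 h.symm).symm
  cases := fun x => by
    rcases M.cases x with h | h | ⟨h, a, ha⟩
    · exact Or.inr (Or.inl h)
    · exact Or.inl h
    · exact Or.inr (Or.inr ⟨fun a => (h a).symm, a, fun h' => ha ((h a).2 h')⟩)

theorem ModelData.sizeR {m : ℕ} {B : Finset (Finset (Fin m))} (hB : IsConnectedBuildingSet m B)
    {X D : Type} (M : ModelData B X D) (a : D) :
    (∃ i, M.σ (M.R a) = {i}) ∨ (∃ i, M.σ (M.R a) = {i}ᶜ) := by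
  classical
  by_contra! hcon
  obtain ⟨h1, h2⟩ := hcon
  set S := M.σ (M.R a) with hS
  have hSB : S ∈ B := M.mem _
  -- the part of the link in which an element lies is constant
  have key : ∀ T U, T ∈ B → U ∈ B → Comp B T S → Comp B U S → ¬ Comp B T U →
      (T ⊆ S ↔ U ⊆ S) := by
    intro T U hT hU hTS hUS hTU
    constructor
    · intro h; by_contra h'; exact hTU (comp_of_link hB hSB hT h hUS h')
    · intro h; by_contra h'; exact hTU (comp_of_link hB hSB hU h hTS h').symm
  have compLa : Comp B (M.σ (M.L a)) S := ((M.compRL a a).2 rfl).symm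
  have keyR : ∀ c, c ≠ a → (M.σ (M.R c) ⊆ S ↔ M.σ (M.L a) ⊆ S) := fun c hc =>
    key _ _ (M.mem _) (M.mem _) (M.compR _ _) compLa (fun h => hc ((M.compRL _ _).1 h))
  have all : ∀ x, x ≠ M.R a → Comp B (M.σ x) S → (M.σ x ⊆ S ↔ M.σ (M.L a) ⊆ S) := by
    intro x hx hxS
    rcases M.cases x with ⟨c, rfl⟩ | ⟨c, rfl⟩ | ⟨h, c, hc⟩
    · exact keyR c (fun h => hx (by rw [h]))
    · have : a = c := (M.compRL a c).1 hxS.symm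
      rw [this]
    · have hca : c ≠ a := by rintro rfl; exact hc hxS
      rw [← keyR c hca]
      exact key _ _ (M.mem _) (M.mem _) hxS (M.compR _ _) hc
  have allB : ∀ T ∈ B, T ≠ Finset.univ → T ≠ S → Comp B T S →
      (T ⊆ S ↔ M.σ (M.L a) ⊆ S) := by
    intro T hT hTu hTS hc
    obtain ⟨x, rfl⟩ := M.surj T hT hTu
    exact all x (fun h => hTS (by rw [h])) hc
  obtain ⟨i, hi⟩ := hB.nonempty_mem _ hSB
  obtain ⟨j, hj⟩ : ∃ j, j ∉ S := by
    by_contra! h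
    exact M.ne_univ _ (Finset.eq_univ_iff_forall.2 h)
  have hin : M.σ (M.L a) ⊆ S := by
    refine (allB {i} (hB.singleton_mem i (Finset.mem_univ _)) ?_ (h1 i).symm
      (Or.inl (by simpa using hi))).1 (by simpa using hi)
    intro h
    have : j ∈ ({i} : Finset (Fin m)) := h ▸ Finset.mem_univ j
    rw [Finset.mem_singleton] at this
    exact hj (this ▸ hi)
  have hjB := hB.singleton_mem j (Finset.mem_univ _)
  by_cases hc : S ∪ {j} ∈ B
  · have := (allB (S ∪ {j}) hc ?_ ?_ (Or.inr (Or.inl Finset.subset_union_left))).2 hin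
    · exact hj (this (by simp))
    · intro h
      apply h2 j
      ext k
      have hk : k ∈ S ∪ {j} := h ▸ Finset.mem_univ k
      simp only [Finset.mem_union, Finset.mem_singleton] at hk
      simp only [Finset.mem_compl, Finset.mem_singleton]
      constructor
      · rintro hk' rfl; exact hj hk'
      · intro h; tauto
    · intro h
      exact hj (h ▸ (by simp : j ∈ S ∪ {j}))
  · have := (allB {j} hjB ?_ (h1 j).symm (Or.inr (Or.inr ⟨by simpa using hj, by
      rwa [Finset.union_comm]⟩))).2 hin
    · exact hj (this (by simp))
    · intro h
      have : i ∈ ({j} : Finset (Fin m)) := h ▸ Finset.mem_univ i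
      rw [Finset.mem_singleton] at this
      exact hj (this ▸ hi)

theorem ModelData.singleR {m : ℕ} {B : Finset (Finset (Fin m))} (hB : IsConnectedBuildingSet m B)
    {X D : Type} (M : ModelData B X D)
    (hD : ∀ a : D, ∃ c₁ c₂ c₃ : D, c₁ ≠ a ∧ c₂ ≠ a ∧ c₃ ≠ a ∧ c₁ ≠ c₂ ∧ c₁ ≠ c₃ ∧ c₂ ≠ c₃)
    (a : D) : ∃ i, M.σ (M.R a) = {i} := by
  classical
  rcases M.sizeR hB a with h | ⟨i, hi⟩
  · exact h
  exfalso
  have co : ∀ c, c ≠ a → M.σ (M.L c) = {i} ∨ ∃ j, M.σ (M.L c) = {j}ᶜ := by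
    intro c hc
    rcases M.swap.sizeR hB c with ⟨j, hj⟩ | h
    · left
      change M.σ (M.L c) = {j} at hj
      have h1 : ¬ Comp B (M.σ (M.R a)) (M.σ (M.L c)) := fun h => hc ((M.compRL _ _).1 h).symm
      rw [hi, hj] at h1
      by_cases hij : j = i
      · rw [hj, hij]
      · exact absurd (Or.inr (Or.inl (by simpa using Ne.symm hij))) h1
    · exact Or.inr h
  have two : ∀ c c', c ≠ a → c' ≠ a → c ≠ c' →
      ¬ (M.σ (M.L c) = {i} ∧ M.σ (M.L c') = {i}) := by
    rintro c c' _ _ hcc ⟨h1, h2⟩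
    exact hcc (M.Linj (M.inj (h1.trans h2.symm)))
  have two' : ∀ c c', c ≠ c' →
      ¬ ((∃ j, M.σ (M.L c) = {j}ᶜ) ∧ (∃ j, M.σ (M.L c') = {j}ᶜ)) := by
    rintro c c' hcc ⟨⟨j, h1⟩, ⟨k, h2⟩⟩
    by_cases hjk : j = k
    · subst hjk; exact hcc (M.Linj (M.inj (h1.trans h2.symm)))
    have h := M.compL c c'
    rw [h1, h2] at h
    rcases h with h | h | ⟨_, h⟩
    · have := h (by simpa using Ne.symm hjk : k ∈ ({j}ᶜ : Finset (Fin m))); simp at this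
    · have := h (by simpa using hjk : j ∈ ({k}ᶜ : Finset (Fin m))); simp at this
    · apply h
      have : ({j}ᶜ ∪ {k}ᶜ : Finset (Fin m)) = Finset.univ := by
        ext l; simp only [Finset.mem_union, Finset.mem_compl, Finset.mem_singleton,
          Finset.mem_univ, iff_true]
        by_contra! h'
        exact hjk (h'.1.symm.trans h'.2)
      rw [this]; exact hB.ground_mem
  obtain ⟨c₁, c₂, c₃, h1, h2, h3, h12, h13, h23⟩ := hD a
  have e1 := co c₁ h1
  have e2 := co c₂ h2
  have e3 := co c₃ h3
  have t12 := two c₁ c₂ h1 h2 h12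
  have t13 := two c₁ c₃ h1 h3 h13
  have t23 := two c₂ c₃ h2 h3 h23
  have s12 := two' c₁ c₂ h12
  have s13 := two' c₁ c₃ h13
  have s23 := two' c₂ c₃ h23
  rcases e1 with e1 | e1 <;> rcases e2 with e2 | e2 <;> rcases e3 with e3 | e3 <;>
    first
    | exact t12 ⟨e1, e2⟩
    | exact t13 ⟨e1, e3⟩
    | exact t23 ⟨e2, e3⟩
    | exact s12 ⟨e1, e2⟩
    | exact s13 ⟨e1, e3⟩
    | exact s23 ⟨e2, e3⟩

theorem ModelData.false {m : ℕ} {B : Finset (Finset (Fin m))} (hB : IsConnectedBuildingSet m B)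
    {X D : Type} (M : ModelData B X D)
    (hD : ∀ a : D, ∃ c₁ c₂ c₃ : D, c₁ ≠ a ∧ c₂ ≠ a ∧ c₃ ≠ a ∧ c₁ ≠ c₂ ∧ c₁ ≠ c₃ ∧ c₂ ≠ c₃)
    (d₀ : D) : False := by
  classical
  obtain ⟨d₁, d₂, -, h10, h20, -, h12, -, -⟩ := hD d₀
  have sR := M.singleR hB hD
  have sL : ∀ a, ∃ i, M.σ (M.L a) = {i} := M.swap.singleR hB hD
  obtain ⟨p, hp⟩ := sR d₀
  obtain ⟨q, hq⟩ := sL d₁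
  obtain ⟨r, hr⟩ := sR d₂
  obtain ⟨s, hs⟩ := sL d₀
  have un : ∀ a c i j, a ≠ c → M.σ (M.R a) = {i} → M.σ (M.L c) = {j} →
      ({i} ∪ {j} : Finset (Fin m)) ∈ B := by
    intro a c i j hac hi hj
    by_contra hn
    apply hac
    rw [← M.compRL, hi, hj]
    refine Or.inr (Or.inr ⟨?_, hn⟩)
    rw [Finset.disjoint_singleton]
    rintro rfl
    exact M.RL a c (M.inj (hi.trans hj.symm))
  have hpq := un _ _ _ _ h10.symm hp hq
  have hrq := un _ _ _ _ h12.symm hr hq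
  have hrs := un _ _ _ _ h20 hr hs
  have npq : p ≠ q := by rintro rfl; exact M.RL _ _ (M.inj (hp.trans hq.symm))
  have nps : p ≠ s := by rintro rfl; exact M.RL _ _ (M.inj (hp.trans hs.symm))
  have nrs : r ≠ s := by rintro rfl; exact M.RL _ _ (M.inj (hr.trans hs.symm))
  have nqs : q ≠ s := by rintro rfl; exact h10 (M.Linj (M.inj (hq.trans hs.symm)))
  have hT := hB.union_mem _ hpq _ hrq ⟨q, by simp⟩
  set T : Finset (Fin m) := {p} ∪ {q} ∪ ({r} ∪ {q}) with hTdef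
  have hsT : s ∉ T := by simp [hTdef, nps.symm, nqs.symm, nrs.symm]
  have hpT : p ∈ T := by simp [hTdef]
  have hqT : q ∈ T := by simp [hTdef]
  have hTs : T ∪ {s} ∈ B := by
    have := hB.union_mem _ hT _ hrs ⟨r, by simp [hTdef]⟩
    have e : T ∪ ({r} ∪ {s}) = T ∪ {s} := by
      ext k; simp [hTdef]
    rwa [e] at this
  have ns : ∀ i, T ≠ {i} := by
    intro i h
    rw [h, Finset.mem_singleton] at hpT hqT
    exact npq (hpT.trans hqT.symm)
  obtain ⟨x, hx⟩ := M.surj T hT (fun h => hsT (h ▸ Finset.mem_univ s))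
  rcases M.cases x with ⟨a, rfl⟩ | ⟨a, rfl⟩ | ⟨h, -⟩
  · obtain ⟨i, hi⟩ := sR a; exact ns i (hx.symm.trans hi)
  · obtain ⟨i, hi⟩ := sL a; exact ns i (hx.symm.trans hi)
  · have h0 := (h d₀).1 (by rw [hx, hp]; exact Or.inr (Or.inl (by simpa using hpT)))
    rw [hx, hs] at h0
    rcases h0 with h0 | h0 | ⟨_, h0⟩
    · have := h0 hpT; rw [Finset.mem_singleton] at this; exact nps this
    · exact hsT (by simpa using h0)
    · exact h0 hTs

/-! ### Geometry of nestohedra -/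

/-- The simplex `Δ_S`. -/
abbrev simplexOn {m : ℕ} (S : Finset (Fin m)) : Set (Fin m → ℝ) :=
  convexHull ℝ ((fun i => (Pi.single i 1 : Fin m → ℝ)) '' (S : Set (Fin m)))

theorem single_mem_simplexOn {m : ℕ} {S : Finset (Fin m)} {i : Fin m} (hi : i ∈ S) :
    (Pi.single i 1 : Fin m → ℝ) ∈ simplexOn S :=
  subset_convexHull ℝ _ ⟨i, hi, rfl⟩

theorem simplexOn_props {m : ℕ} {S : Finset (Fin m)} {x : Fin m → ℝ} (hx : x ∈ simplexOn S) :
    (∀ i, 0 ≤ x i) ∧ (∀ i, i ∉ S → x i = 0) ∧ ∑ i, x i = 1 := by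
  have hc : Convex ℝ {x : Fin m → ℝ | (∀ i, 0 ≤ x i) ∧ (∀ i, i ∉ S → x i = 0) ∧
      ∑ i, x i = 1} := by
    rintro x ⟨h1, h2, h3⟩ y ⟨k1, k2, k3⟩ a b ha hb hab
    refine ⟨fun i => ?_, fun i hi => ?_, ?_⟩
    · have := h1 i; have := k1 i
      simp only [Pi.add_apply, Pi.smul_apply, smul_eq_mul]; positivity
    · simp [h2 i hi, k2 i hi]
    · simp only [Pi.add_apply, Pi.smul_apply, smul_eq_mul, Finset.sum_add_distrib,
        ← Finset.mul_sum, h3, k3, mul_one, hab]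
  refine convexHull_min ?_ hc hx
  rintro _ ⟨i, hi, rfl⟩
  refine ⟨fun j => ?_, fun j hj => ?_, ?_⟩
  · by_cases h : j = i
    · subst h; simp
    · simp [h]
  · have : j ≠ i := by rintro rfl; exact hj hi
    simp [this]
  · simp

theorem mem_nestohedron {m : ℕ} {B : Finset (Finset (Fin m))} {x : Fin m → ℝ} :
    x ∈ nestohedron m B ↔ ∃ y : Finset (Fin m) → (Fin m → ℝ),
      (∀ U ∈ B, y U ∈ simplexOn U) ∧ ∑ U ∈ B, y U = x := by
  unfold nestohedron
  rw [Set.mem_finsetSum]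
  constructor
  · rintro ⟨g, hg, h⟩; exact ⟨g, fun U hU => hg hU, h⟩
  · rintro ⟨g, hg, h⟩; exact ⟨g, fun {U} hU => hg U hU, h⟩

theorem summand_max {m : ℕ} {B : Finset (Finset (Fin m))} (l : (Fin m → ℝ) →ₗ[ℝ] ℝ)
    {y : Finset (Fin m) → (Fin m → ℝ)} (hy : ∀ U ∈ B, y U ∈ simplexOn U)
    (hmax : ∀ z ∈ nestohedron m B, l z ≤ l (∑ U ∈ B, y U))
    {U : Finset (Fin m)} (hU : U ∈ B) {z : Fin m → ℝ} (hz : z ∈ simplexOn U) :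
    l z ≤ l (y U) := by
  classical
  have h := hmax (∑ V ∈ B, Function.update y U z V) (mem_nestohedron.2 ⟨_, ?_, rfl⟩)
  · rw [map_sum, map_sum, ← Finset.add_sum_erase _ _ hU, ← Finset.add_sum_erase _ _ hU] at h
    have e : ∑ V ∈ B.erase U, l (Function.update y U z V) = ∑ V ∈ B.erase U, l (y V) := by
      refine Finset.sum_congr rfl fun V hV => ?_
      rw [Function.update_of_ne (Finset.ne_of_mem_erase hV)]
    rw [e, Function.update_self] at h
    linarith
  · intro V hV
    by_cases h : V = U
    · subst h; simpa using hz
    · rw [Function.update_of_ne h]; exact hy V hV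

/-- The functional `x ↦ ∑_{i ∈ T} x i`. -/
noncomputable def sumOn {m : ℕ} (T : Finset (Fin m)) : (Fin m → ℝ) →ₗ[ℝ] ℝ :=
  ∑ i ∈ T, LinearMap.proj i

theorem sumOn_apply {m : ℕ} (T : Finset (Fin m)) (x : Fin m → ℝ) :
    sumOn T x = ∑ i ∈ T, x i := by
  simp [sumOn]

theorem zero_of_mem_minFace {m : ℕ} {B : Finset (Finset (Fin m))} {T : Finset (Fin m)}
    {y : Finset (Fin m) → (Fin m → ℝ)} (hy : ∀ U ∈ B, y U ∈ simplexOn U)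
    (hx : ∑ U ∈ B, y U ∈ minFace m B T) {U : Finset (Fin m)} (hU : U ∈ B) (hUT : ¬ U ⊆ T)
    {i : Fin m} (hi : i ∈ T) : y U i = 0 := by
  obtain ⟨k, hkU, hkT⟩ := Finset.not_subset.1 hUT
  have h := summand_max (-(sumOn T)) hy (fun z hz => by
    have := hx.2 z hz
    simp only [LinearMap.neg_apply, sumOn_apply]
    linarith) hU (single_mem_simplexOn hkU)
  simp only [LinearMap.neg_apply, sumOn_apply] at h
  have h0 : ∑ i ∈ T, (Pi.single k 1 : Fin m → ℝ) i = 0 := by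
    refine Finset.sum_eq_zero fun j hj => ?_
    have : j ≠ k := by rintro rfl; exact hkT hj
    simp [this]
  have hnn := (simplexOn_props (hy U hU)).1
  have h1 : ∑ i ∈ T, y U i = 0 := le_antisymm (by linarith) (Finset.sum_nonneg fun i _ => hnn i)
  exact (Finset.sum_eq_zero_iff_of_nonneg (fun i _ => hnn i)).1 h1 i hi

theorem mem_minFace_of_zero {m : ℕ} {B : Finset (Finset (Fin m))} {T : Finset (Fin m)}
    {y : Finset (Fin m) → (Fin m → ℝ)} (hy : ∀ U ∈ B, y U ∈ simplexOn U)
    (h0 : ∀ U ∈ B, ¬ U ⊆ T → ∀ i ∈ T, y U i = 0) :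
    ∑ U ∈ B, y U ∈ minFace m B T := by
  refine ⟨mem_nestohedron.2 ⟨y, hy, rfl⟩, fun z hz => ?_⟩
  obtain ⟨w, hw, rfl⟩ := mem_nestohedron.1 hz
  rw [← sumOn_apply, ← sumOn_apply, map_sum, map_sum]
  refine Finset.sum_le_sum fun U hU => ?_
  rw [sumOn_apply, sumOn_apply]
  by_cases hUT : U ⊆ T
  · have e : ∀ v ∈ simplexOn U, ∑ i ∈ T, v i = 1 := by
      intro v hv
      obtain ⟨_, h2, h3⟩ := simplexOn_props hv
      rw [← h3]
      exact Finset.sum_subset (Finset.subset_univ _) fun i _ hi => h2 i (fun h => hi (hUT h))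
    rw [e _ (hy U hU), e _ (hw U hU)]
  · rw [Finset.sum_eq_zero (h0 U hU hUT)]
    exact Finset.sum_nonneg fun i _ => (simplexOn_props (hw U hU)).1 i

/-- The point of the nestohedron attached to a choice function. -/
noncomputable def choicePt {m : ℕ} (B : Finset (Finset (Fin m)))
    (f : Finset (Fin m) → Fin m) : Fin m → ℝ :=
  ∑ U ∈ B, (Pi.single (f U) 1 : Fin m → ℝ)

theorem choicePt_mem_minFace {m : ℕ} {B : Finset (Finset (Fin m))}
    {f : Finset (Fin m) → Fin m} (hf : ∀ U ∈ B, f U ∈ U) (T : Finset (Fin m)) :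
    choicePt B f ∈ minFace m B T ↔ ∀ U ∈ B, ¬ U ⊆ T → f U ∉ T := by
  have hy : ∀ U ∈ B, (Pi.single (f U) 1 : Fin m → ℝ) ∈ simplexOn U := fun U hU =>
    single_mem_simplexOn (hf U hU)
  constructor
  · intro h U hU hUT hT
    have := zero_of_mem_minFace (y := fun U => Pi.single (f U) 1) hy h hU hUT hT
    simp at this
  · intro h
    refine mem_minFace_of_zero (y := fun U => Pi.single (f U) 1) hy fun U hU hUT i hi => ?_
    have : i ≠ f U := by rintro rfl; exact h U hU hUT hi
    simp [this]

theorem choicePt_mem {m : ℕ} {B : Finset (Finset (Fin m))}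
    {f : Finset (Fin m) → Fin m} (hf : ∀ U ∈ B, f U ∈ U) :
    choicePt B f ∈ nestohedron m B :=
  mem_nestohedron.2 ⟨_, fun U hU => single_mem_simplexOn (hf U hU), rfl⟩

/-- Building points from pointwise choices. -/
theorem exists_choice {m : ℕ} {B : Finset (Finset (Fin m))} (hB : IsConnectedBuildingSet m B)
    (p : Finset (Fin m) → Fin m → Prop) (h : ∀ U ∈ B, ∃ i ∈ U, p U i) :
    ∃ f : Finset (Fin m) → Fin m, ∀ U ∈ B, f U ∈ U ∧ p U (f U) := by
  classical
  obtain ⟨i₀, -⟩ := hB.nonempty_mem _ hB.ground_mem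
  refine ⟨fun U => if hU : U ∈ B then (h U hU).choose else i₀, fun U hU => ?_⟩
  simp only [hU, dif_pos]
  exact (h U hU).choose_spec

theorem minFace_inter_nonempty_iff {m : ℕ} {B : Finset (Finset (Fin m))}
    (hB : IsConnectedBuildingSet m B) {S T : Finset (Fin m)} (hS : S ∈ B) (hT : T ∈ B) :
    (minFace m B S ∩ minFace m B T).Nonempty ↔ Comp B S T := by
  classical
  constructor
  · rintro ⟨x, hxS, hxT⟩
    by_contra hc
    have hST : ¬ S ⊆ T := fun h => hc (Or.inl h)
    have hTS : ¬ T ⊆ S := fun h => hc (Or.inr (Or.inl h))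
    have hU : S ∪ T ∈ B := by
      by_contra hU
      by_cases hd : Disjoint S T
      · exact hc (Or.inr (Or.inr ⟨hd, hU⟩))
      · exact hU (hB.union_mem _ hS _ hT (by
          rwa [Finset.nonempty_iff_ne_empty, Ne, ← Finset.disjoint_iff_inter_eq_empty]))
    obtain ⟨y, hy, rfl⟩ := mem_nestohedron.1 hxS.1
    obtain ⟨_, h2, h3⟩ := simplexOn_props (hy _ hU)
    have : ∑ i, y (S ∪ T) i = 0 := by
      refine Finset.sum_eq_zero fun i _ => ?_
      by_cases hi : i ∈ S
      · exact zero_of_mem_minFace hy hxS hU (fun h => hTS (Finset.subset_union_right.trans h)) hi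
      by_cases hi' : i ∈ T
      · exact zero_of_mem_minFace hy hxT hU (fun h => hST (Finset.subset_union_left.trans h)) hi'
      exact h2 i (by simp [hi, hi'])
    linarith
  · intro hc
    have main : ∀ U ∈ B, ∃ i ∈ U, (¬ U ⊆ S → i ∉ S) ∧ (¬ U ⊆ T → i ∉ T) := by
      intro U hU
      obtain ⟨u, hu⟩ := hB.nonempty_mem _ hU
      by_cases h1 : U ⊆ S
      · by_cases h2 : U ⊆ T
        · exact ⟨u, hu, fun h => absurd h1 h, fun h => absurd h2 h⟩
        · obtain ⟨k, hk, hk'⟩ := Finset.not_subset.1 h2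
          exact ⟨k, hk, fun h => absurd h1 h, fun _ => hk'⟩
      · by_cases h2 : U ⊆ T
        · obtain ⟨k, hk, hk'⟩ := Finset.not_subset.1 h1
          exact ⟨k, hk, fun _ => hk', fun h => absurd h2 h⟩
        · obtain ⟨k, hk, hk'⟩ := Finset.not_subset.1 h1
          obtain ⟨l, hl, hl'⟩ := Finset.not_subset.1 h2
          rcases hc with hc | hc | ⟨hd, hn⟩
          · exact ⟨l, hl, fun _ h => hl' (hc h), fun _ => hl'⟩
          · exact ⟨k, hk, fun _ => hk', fun _ h => hk' (hc h)⟩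
          · by_contra! hcon
            have hsub : U ⊆ S ∪ T := by
              intro i hi
              by_contra hi'
              rw [Finset.mem_union, not_or] at hi'
              exact hi'.2 (hcon i hi (fun _ => hi'.1)).2
            have hkT : k ∈ T := (Finset.mem_union.1 (hsub hk)).resolve_left hk'
            have hlS : l ∈ S := (Finset.mem_union.1 (hsub hl)).resolve_right hl'
            have a1 := hB.union_mem _ hU _ hS ⟨l, by simp [hl, hlS]⟩
            have a2 := hB.union_mem _ a1 _ hT ⟨k, by simp [hk, hkT]⟩
            rw [Finset.union_assoc, Finset.union_eq_right.2 hsub] at a2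
            exact hn a2
    obtain ⟨f, hf⟩ := exists_choice hB _ main
    have hf' : ∀ U ∈ B, f U ∈ U := fun U hU => (hf U hU).1
    exact ⟨choicePt B f, (choicePt_mem_minFace hf' S).2 fun U hU => (hf U hU).2.1,
      (choicePt_mem_minFace hf' T).2 fun U hU => (hf U hU).2.2⟩

theorem minFace_subset_eq {m : ℕ} {B : Finset (Finset (Fin m))}
    (hB : IsConnectedBuildingSet m B) {S T : Finset (Fin m)} (hS : S ∈ B) (hT : T ∈ B)
    (hTu : T ≠ Finset.univ) (h : minFace m B S ⊆ minFace m B T) : S = T := by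
  classical
  have good : ∀ f : Finset (Fin m) → Fin m, (∀ U ∈ B, f U ∈ U) →
      (∀ U ∈ B, ¬ U ⊆ S → f U ∉ S) → (∀ U ∈ B, ¬ U ⊆ T → f U ∉ T) := fun f hf hfS =>
    (choicePt_mem_minFace hf T).1 (h ((choicePt_mem_minFace hf S).2 hfS))
  -- it suffices to find one bad choice
  have bad : ∀ V ∈ B, ¬ V ⊆ T → ∀ k ∈ V, k ∈ T → (¬ V ⊆ S → k ∉ S) → False := by
    intro V hV hVT k hkV hkT hkS
    obtain ⟨f, hf⟩ := exists_choice hB (fun U i => (¬ U ⊆ S → i ∉ S) ∧ (U = V → i = k)) (by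
      intro U hU
      by_cases hUV : U = V
      · subst hUV; exact ⟨k, hkV, hkS, fun _ => rfl⟩
      · by_cases hUS : U ⊆ S
        · obtain ⟨u, hu⟩ := hB.nonempty_mem _ hU
          exact ⟨u, hu, fun h => absurd hUS h, fun h => absurd h hUV⟩
        · obtain ⟨j, hj, hj'⟩ := Finset.not_subset.1 hUS
          exact ⟨j, hj, fun _ => hj', fun h => absurd h hUV⟩)
    refine good f (fun U hU => (hf U hU).1) (fun U hU => (hf U hU).2.1) V hV hVT ?_
    rw [(hf V hV).2.2 rfl]; exact hkT
  by_contra hne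
  by_cases hTS : T ⊆ S
  · obtain ⟨k, hk⟩ := hB.nonempty_mem _ hT
    exact bad S hS (fun h' => hne (h'.antisymm hTS)) k (hTS hk) hk
      (fun h' => absurd (Finset.Subset.refl S) h')
  · obtain ⟨k, hkT, hkS⟩ := Finset.not_subset.1 hTS
    exact bad Finset.univ hB.ground_mem (fun h' => hTu (Finset.univ_subset_iff.1 h')) k
      (Finset.mem_univ k) hkT (fun _ => hkS)

theorem minFace_isFace {m : ℕ} {B : Finset (Finset (Fin m))}
    (hB : IsConnectedBuildingSet m B) {T : Finset (Fin m)} (hT : T ∈ B) :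
    IsFaceOf (minFace m B T) (nestohedron m B) := by
  refine ⟨?_, fun _ => ⟨LinearMap.toContinuousLinearMap (-(sumOn T)), ?_⟩⟩
  · have := (minFace_inter_nonempty_iff hB hT hT).2 (Or.inl (Finset.Subset.refl T))
    rwa [Set.inter_self] at this
  · ext x
    simp [minFace, sumOn_apply]

theorem minFace_ne {m : ℕ} {B : Finset (Finset (Fin m))}
    (hB : IsConnectedBuildingSet m B) {T : Finset (Fin m)} (hT : T ∈ B)
    (hTu : T ≠ Finset.univ) : minFace m B T ≠ nestohedron m B := by
  intro h
  refine hTu (minFace_subset_eq hB hB.ground_mem hT hTu ?_).symm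
  rw [h]
  exact fun x hx => hx.1

theorem exists_minFace_of_proper {m : ℕ} {B : Finset (Finset (Fin m))}
    (hB : IsConnectedBuildingSet m B) {F : Set (Fin m → ℝ)}
    (hF : IsFaceOf F (nestohedron m B)) (hne : F ≠ nestohedron m B) :
    ∃ T ∈ B, T ≠ Finset.univ ∧ F ⊆ minFace m B T := by
  classical
  obtain ⟨l, hl⟩ := hF.2 hF.1
  set w : Fin m → ℝ := fun i => l (Pi.single i 1) with hw
  have lw : ∀ x : Fin m → ℝ, l x = ∑ i, x i * w i := by
    intro x
    conv_lhs => rw [← Finset.univ_sum_single x]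
    rw [map_sum]
    refine Finset.sum_congr rfl fun i _ => ?_
    have : (Pi.single i (x i) : Fin m → ℝ) = x i • Pi.single i 1 := by
      rw [← Pi.single_smul, smul_eq_mul, mul_one]
    rw [this, map_smul, smul_eq_mul]
  obtain ⟨i₀, -, hi₀⟩ := Finset.exists_max_image Finset.univ w
    (hB.nonempty_mem _ hB.ground_mem)
  -- `w` is not constant
  obtain ⟨j₀, hj₀⟩ : ∃ j, w j < w i₀ := by
    by_contra! hcon
    have hconst : ∀ i, w i = w i₀ := fun i => le_antisymm (hi₀ i (Finset.mem_univ _)) (hcon i)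
    apply hne
    have hc : ∀ x ∈ nestohedron m B, l x = (B.card : ℝ) * w i₀ := by
      intro x hx
      obtain ⟨y, hy, rfl⟩ := mem_nestohedron.1 hx
      rw [map_sum, ← nsmul_eq_mul]
      refine Finset.sum_eq_card_nsmul fun U hU => ?_
      rw [lw]
      simp only [hconst, ← Finset.sum_mul, (simplexOn_props (hy U hU)).2.2, one_mul]
    rw [hl]
    ext x
    simp only [Set.mem_ofPred_eq]
    exact ⟨fun h => h.1, fun h => ⟨h, fun z hz => by rw [hc x h, hc z hz]⟩⟩
  -- maximal element of `B` on which `w` is not maximal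
  obtain ⟨T, hTm, hTmax⟩ := Finset.exists_max_image
    (B.filter (fun S => ∀ i ∈ S, w i < w i₀)) Finset.card
    ⟨{j₀}, by simp [hB.singleton_mem j₀ (Finset.mem_univ _), hj₀]⟩
  rw [Finset.mem_filter] at hTm
  obtain ⟨hTB, hTw⟩ := hTm
  refine ⟨T, hTB, fun h => absurd (hTw i₀ (h ▸ Finset.mem_univ _)) (lt_irrefl _), fun x hx => ?_⟩
  rw [hl] at hx
  obtain ⟨y, hy, rfl⟩ := mem_nestohedron.1 hx.1
  refine mem_minFace_of_zero hy fun U hU hUT i hi => ?_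
  obtain ⟨h1, h2, h3⟩ := simplexOn_props (hy U hU)
  by_cases hiU : i ∈ U
  swap
  · exact h2 i hiU
  obtain ⟨k, hkU, hk⟩ : ∃ k ∈ U, w k = w i₀ := by
    by_contra! hcon
    have hUw : ∀ k ∈ U, w k < w i₀ := fun k hk =>
      lt_of_le_of_ne (hi₀ k (Finset.mem_univ _)) (hcon k hk)
    have := hTmax (U ∪ T) (Finset.mem_filter.2
      ⟨hB.union_mem _ hU _ hTB ⟨i, by simp [hiU, hi]⟩, fun k hk =>
        (Finset.mem_union.1 hk).elim (hUw k) (hTw k)⟩)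
    have e := Finset.eq_of_subset_of_card_le (Finset.subset_union_right : T ⊆ U ∪ T) this
    exact hUT (Finset.subset_union_left.trans e.ge)
  have hmax := summand_max (l : (Fin m → ℝ) →ₗ[ℝ] ℝ) hy (fun z hz => hx.2 z hz) hU
    (single_mem_simplexOn hkU)
  have hmax' : w i₀ ≤ l (y U) := by rw [← hk]; exact hmax
  rw [lw] at hmax'
  have hsum : ∑ i, y U i * (w i₀ - w i) ≤ 0 := by
    simp only [mul_sub, Finset.sum_sub_distrib, ← Finset.sum_mul, h3, one_mul]
    linarith
  have hnn : ∀ j ∈ Finset.univ, 0 ≤ y U j * (w i₀ - w j) := fun j hj =>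
    mul_nonneg (h1 j) (sub_nonneg.2 (hi₀ j hj))
  have hz := (Finset.sum_eq_zero_iff_of_nonneg hnn).1
    (le_antisymm hsum (Finset.sum_nonneg hnn)) i (Finset.mem_univ _)
  have := hTw i hi
  rcases mul_eq_zero.1 hz with h | h
  · exact h
  · linarith

/-! ### Facets are the maximal proper faces -/

theorem polyDim_eq {d : ℕ} (P : Set (Fin d → ℝ)) :
    polyDim P = Module.finrank ℝ (vectorSpan ℝ P) := by
  unfold polyDim
  rw [direction_affineSpan]

theorem vectorSpan_le_ker {d : ℕ} {F : Set (Fin d → ℝ)} (g : (Fin d → ℝ) →ₗ[ℝ] ℝ) {c : ℝ}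
    (h : ∀ x ∈ F, g x = c) : vectorSpan ℝ F ≤ LinearMap.ker g := by
  rw [vectorSpan_def, Submodule.span_le]
  rintro _ ⟨x, hx, y, hy, rfl⟩
  simp [h x hx, h y hy]

theorem face_const {d : ℕ} {P F : Set (Fin d → ℝ)} (hF : IsFaceOf F P) :
    ∃ (l : (Fin d → ℝ) →ₗ[ℝ] ℝ) (c : ℝ), (∀ x ∈ P, l x ≤ c) ∧ F = {x ∈ P | l x = c} := by
  obtain ⟨⟨f, hf⟩, hE⟩ := hF
  obtain ⟨l, hl⟩ := hE ⟨f, hf⟩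
  have hf' := hf
  rw [hl] at hf'
  refine ⟨l, l f, fun x hx => hf'.2 x hx, ?_⟩
  ext x
  constructor
  · intro hx
    rw [hl] at hx
    exact ⟨hx.1, le_antisymm (hf'.2 x hx.1) (hx.2 f hf'.1)⟩
  · rintro ⟨hx, hx'⟩
    rw [hl]
    exact ⟨hx, fun y hy => (hf'.2 y hy).trans hx'.ge⟩

theorem face_of_functional {d : ℕ} {P : Set (Fin d → ℝ)} (l : (Fin d → ℝ) →ₗ[ℝ] ℝ) {c : ℝ}
    (h : ∀ x ∈ P, l x ≤ c) {f : Fin d → ℝ} (hf : f ∈ P) (hfc : l f = c) :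
    IsFaceOf {x ∈ P | l x = c} P := by
  refine ⟨⟨f, hf, hfc⟩, fun _ => ⟨LinearMap.toContinuousLinearMap l, ?_⟩⟩
  ext x
  constructor
  · rintro ⟨hx, hx'⟩
    exact ⟨hx, fun y hy => (h y hy).trans hx'.ge⟩
  · rintro ⟨hx, hx'⟩
    exact ⟨hx, le_antisymm (h x hx) (hfc.ge.trans (hx' f hf))⟩

theorem vectorSpan_lt_of_face {d : ℕ} {P F : Set (Fin d → ℝ)} (hF : IsFaceOf F P) (hne : F ≠ P) :
    vectorSpan ℝ F < vectorSpan ℝ P := by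
  obtain ⟨l, c, hle, hFl⟩ := face_const hF
  obtain ⟨f, hf⟩ := hF.1
  have hFP : F ⊆ P := hF.2.subset
  obtain ⟨p, hp, hpF⟩ : ∃ p ∈ P, p ∉ F := by
    by_contra! h
    exact hne (hFP.antisymm h)
  refine lt_of_le_of_ne (vectorSpan_mono ℝ hFP) fun h => ?_
  have h1 : p -ᵥ f ∈ vectorSpan ℝ P := vsub_mem_vectorSpan ℝ hp (hFP hf)
  rw [← h] at h1
  have h2 := vectorSpan_le_ker l (c := c) (F := F) (by rw [hFl]; exact fun x hx => hx.2) h1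
  rw [hFl] at hf
  rw [LinearMap.mem_ker, vsub_eq_sub, map_sub, hf.2, sub_eq_zero] at h2
  exact hpF (by rw [hFl]; exact ⟨hp, h2⟩)

theorem facet_maximal {d : ℕ} {P F G : Set (Fin d → ℝ)} (hF : IsFacetOf F P)
    (hG : IsFaceOf G P) (hFG : F ⊆ G) (hne : G ≠ P) : F = G := by
  have hlt := Submodule.finrank_lt_finrank_of_lt (vectorSpan_lt_of_face hG hne)
  have hdim := hF.2
  rw [polyDim_eq, polyDim_eq] at hdim
  have hle : vectorSpan ℝ F ≤ vectorSpan ℝ G := vectorSpan_mono ℝ hFG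
  have heq := Submodule.eq_of_le_of_finrank_le hle (by omega)
  refine hFG.antisymm fun x hx => ?_
  obtain ⟨l, c, -, hFl⟩ := face_const hF.1
  obtain ⟨f, hf⟩ := hF.1.1
  have h1 : x -ᵥ f ∈ vectorSpan ℝ G := vsub_mem_vectorSpan ℝ hx (hFG hf)
  rw [← heq] at h1
  have h2 := vectorSpan_le_ker l (c := c) (F := F) (by rw [hFl]; exact fun x hx => hx.2) h1
  rw [hFl] at hf
  rw [LinearMap.mem_ker, vsub_eq_sub, map_sub, hf.2, sub_eq_zero] at h2
  rw [hFl]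
  exact ⟨hG.2.subset hx, h2⟩

theorem facet_ne {d : ℕ} {P F : Set (Fin d → ℝ)} (hF : IsFacetOf F P) : F ≠ P := by
  rintro rfl
  have := hF.2
  omega

theorem facet_of_maximal {d : ℕ} {P F : Set (Fin d → ℝ)} (hP : IsPolytope P)
    (hF : IsFaceOf F P) (hne : F ≠ P)
    (hmax : ∀ G, IsFaceOf G P → F ⊆ G → G ≠ P → F = G) : IsFacetOf F P := by
  obtain ⟨V, hV⟩ := hP
  refine ⟨hF, ?_⟩
  rw [polyDim_eq, polyDim_eq]
  have hlt := vectorSpan_lt_of_face hF hne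
  have hlt' := Submodule.finrank_lt_finrank_of_lt hlt
  obtain ⟨l, c, hle, hFl⟩ := face_const hF
  obtain ⟨f, hf⟩ := hF.1
  have hFP : F ⊆ P := hF.2.subset
  have hFc : ∀ x ∈ F, l x = c := by rw [hFl]; exact fun x hx => hx.2
  obtain ⟨p, hp, hpF⟩ : ∃ p ∈ P, p ∉ F := by
    by_contra! h
    exact hne (hFP.antisymm h)
  have hpc : l (p - f) ≠ 0 := by
    rw [map_sub, hFc f hf, sub_ne_zero]
    intro h
    exact hpF (by rw [hFl]; exact ⟨hp, h⟩)
  have hpD : p - f ∈ vectorSpan ℝ P := vsub_mem_vectorSpan ℝ hp (hFP hf)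
  have hVP : ∀ v ∈ V, v ∈ P := fun v hv => by rw [hV]; exact subset_convexHull ℝ _ hv
  -- the key rotation argument
  have key : ∀ u ∈ vectorSpan ℝ P, l u = 0 → u ∈ vectorSpan ℝ F := by
    intro u hu hlu
    by_contra huF
    obtain ⟨g, hgu, hgF⟩ := Submodule.exists_le_ker_of_notMem huF
    have hgF' : ∀ x ∈ F, g x = g f := by
      intro x hx
      have := hgF (vsub_mem_vectorSpan ℝ hx hf)
      rwa [LinearMap.mem_ker, vsub_eq_sub, map_sub, sub_eq_zero] at this
    obtain ⟨v, hv, hvg⟩ : ∃ v ∈ V, g v ≠ g f := by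
      by_contra! hcon
      have hall : ∀ x ∈ P, g x = g f := by
        intro x hx
        rw [hV] at hx
        exact convexHull_min (t := {x | g x = g f}) (fun v hv => hcon v hv)
          (convex_hyperplane g.isLinear _) hx
      exact hgu (vectorSpan_le_ker g hall hu)
    -- a version with a sign
    have main : ∀ g : (Fin d → ℝ) →ₗ[ℝ] ℝ, g u ≠ 0 → (∀ x ∈ F, g x = g f) →
        (∃ v ∈ V, g f < g v) → False := by
      classical
      intro g hgu hgF hv
      obtain ⟨v₀, hv₀⟩ := hv
      obtain ⟨w, hw, hwmin⟩ := Finset.exists_min_image (V.filter (fun v => g f < g v))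
        (fun v => (c - l v) / (g v - g f)) ⟨v₀, by simpa using hv₀⟩
      rw [Finset.mem_filter] at hw
      set t := (c - l w) / (g w - g f) with ht
      have hwF : w ∉ F := fun h => hw.2.ne' (hgF w h)
      have hwl : l w < c := lt_of_le_of_ne (hle w (hVP w hw.1)) fun h =>
        hwF (by rw [hFl]; exact ⟨hVP w hw.1, h⟩)
      have htpos : 0 < t := div_pos (by linarith) (by linarith [hw.2])
      have hwt : (l + t • g) w = c + t * g f := by
        have : t * (g w - g f) = c - l w := div_mul_cancel₀ _ (by linarith [hw.2])
        simp only [LinearMap.add_apply, LinearMap.smul_apply, smul_eq_mul]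
        linarith
      have hleV : ∀ v ∈ V, (l + t • g) v ≤ c + t * g f := by
        intro v hv
        simp only [LinearMap.add_apply, LinearMap.smul_apply, smul_eq_mul]
        have hlv := hle v (hVP v hv)
        by_cases hgv : g f < g v
        · have := hwmin v (Finset.mem_filter.2 ⟨hv, hgv⟩)
          rw [le_div_iff₀ (by linarith)] at this
          linarith
        · have := mul_nonneg htpos.le (sub_nonneg.2 (not_lt.1 hgv))
          linarith
      have hleP : ∀ x ∈ P, (l + t • g) x ≤ c + t * g f := by
        intro x hx
        rw [hV] at hx
        exact convexHull_min (t := {x | (l + t • g) x ≤ c + t * g f}) (fun v hv => hleV v hv)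
          (convex_halfSpace_le (l + t • g).isLinear _) hx
      have hG := face_of_functional (l + t • g) hleP (hVP w hw.1) hwt
      have hFG : F ⊆ {x ∈ P | (l + t • g) x = c + t * g f} := by
        intro x hx
        refine ⟨hFP hx, ?_⟩
        simp only [LinearMap.add_apply, LinearMap.smul_apply, smul_eq_mul, hFc x hx, hgF x hx]
      have hGne : {x ∈ P | (l + t • g) x = c + t * g f} ≠ P := by
        intro h
        have hall : ∀ x ∈ P, (l + t • g) x = c + t * g f := by
          intro x hx
          rw [← h] at hx
          exact hx.2
        have h0 := vectorSpan_le_ker _ hall hu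
        simp only [LinearMap.mem_ker, LinearMap.add_apply, LinearMap.smul_apply, smul_eq_mul,
          hlu, zero_add, mul_eq_zero] at h0
        rcases h0 with h0 | h0
        · exact htpos.ne' h0
        · exact hgu h0
      exact hwF (by rw [hmax _ hG hFG hGne]; exact ⟨hVP w hw.1, hwt⟩)
    rcases lt_or_gt_of_ne hvg with h | h
    · exact main (-g) (by simpa using hgu) (fun x hx => by simp [hgF' x hx])
        ⟨v, hv, by simpa using h⟩
    · exact main g hgu hgF' ⟨v, hv, h⟩
  have hsup : vectorSpan ℝ P ≤ vectorSpan ℝ F ⊔ Submodule.span ℝ {p - f} := by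
    intro x hx
    rw [Submodule.mem_sup]
    refine ⟨x - (l x / l (p - f)) • (p - f), key _ (Submodule.sub_mem _ hx
      (Submodule.smul_mem _ _ hpD)) ?_, (l x / l (p - f)) • (p - f),
      Submodule.smul_mem _ _ (Submodule.mem_span_singleton_self _), by simp⟩
    rw [map_sub, map_smul, smul_eq_mul, div_mul_cancel₀ _ hpc, sub_self]
  have h1 := Submodule.finrank_mono hsup
  have h2 := Submodule.finrank_add_le_finrank_add_finrank (vectorSpan ℝ F)
    (Submodule.span ℝ {p - f})
  have h3 : Module.finrank ℝ (Submodule.span ℝ {p - f}) = 1 :=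
    finrank_span_singleton (fun h => hpc (by rw [h, map_zero]))
  omega

/-! ### The type `D` model -/

theorem zval (n k : ℕ) (hk : k < 2 * n) : ((k : ℕ) : ZMod (2 * n)).val = k :=
  ZMod.val_cast_of_lt hk

theorem two_n_zero (n : ℕ) : (n : ZMod (2 * n)) + (n : ZMod (2 * n)) = 0 := by
  have := ZMod.natCast_self (2 * n)
  push_cast at this
  linear_combination this

/-- Every non-diameter diagonal crosses a diameter. -/
theorem exists_crossing (n : ℕ) (hn : 4 ≤ n) (e : Finset (ZMod (2 * n))) (he : IsDiag (2 * n) e)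
    (hd : ¬ IsDiameter n e) : ∃ c : ZMod (2 * n), Crosses (2 * n) {c, c + n} e := by
  have : NeZero (2 * n) := ⟨by omega⟩
  obtain ⟨x, y, rfl, h0, h1, h2⟩ := he
  obtain ⟨k, hk, hky⟩ : ∃ k : ℕ, k < 2 * n ∧ y = x + (k : ZMod (2 * n)) :=
    ⟨(y - x).val, ZMod.val_lt _, by rw [ZMod.natCast_zmod_val]; ring⟩
  have k0 : k ≠ 0 := by rintro rfl; simp at hky; exact h0 hky
  have k1 : k ≠ 1 := by rintro rfl; simp at hky; exact h1 hky
  have kn : k ≠ n := by rintro rfl; exact hd ⟨x, by rw [hky]⟩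
  have k2 : k ≠ 2 * n - 1 := by
    rintro rfl
    apply h2
    rw [hky, Nat.cast_sub (by omega), ZMod.natCast_self]
    simp [sub_eq_add_neg]
  have hnn := two_n_zero n
  by_cases hkn : k < n
  · refine ⟨x + 1, x + 1, x + 1 + n, y, x, rfl, Finset.pair_comm _ _, ?_, ?_⟩
    · unfold StrictBtw
      have e1 : y - (x + 1) = ((k - 1 : ℕ) : ZMod (2 * n)) := by
        rw [Nat.cast_sub (by omega), hky]; push_cast; ring
      have e2 : x + 1 + (n : ZMod (2 * n)) - (x + 1) = (n : ℕ) := by ring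
      rw [e1, e2, zval _ _ (by omega), zval _ _ (by omega)]
      omega
    · unfold StrictBtw
      have e1 : x - (x + 1 + n) = ((n - 1 : ℕ) : ZMod (2 * n)) := by
        rw [Nat.cast_sub (by omega)]; push_cast; linear_combination -hnn
      have e2 : x + 1 - (x + 1 + (n : ZMod (2 * n))) = (n : ℕ) := by linear_combination -hnn
      rw [e1, e2, zval _ _ (by omega), zval _ _ (by omega)]
      omega
  · refine ⟨x - 1, x - 1 + n, x - 1, y, x, Finset.pair_comm _ _, Finset.pair_comm _ _, ?_, ?_⟩
    · unfold StrictBtw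
      have e1 : y - (x - 1 + n) = ((k + 1 - n : ℕ) : ZMod (2 * n)) := by
        rw [Nat.cast_sub (by omega), hky]; push_cast; ring
      have e2 : x - 1 - (x - 1 + (n : ZMod (2 * n))) = (n : ℕ) := by linear_combination -hnn
      rw [e1, e2, zval _ _ (by omega), zval _ _ (by omega)]
      omega
    · unfold StrictBtw
      have e1 : x - (x - 1) = ((1 : ℕ) : ZMod (2 * n)) := by push_cast; ring
      have e2 : x - 1 + (n : ZMod (2 * n)) - (x - 1) = (n : ℕ) := by ring
      rw [e1, e2, zval _ _ (by omega), zval _ _ (by omega)]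
      omega

theorem diam_isDiag (n : ℕ) (hn : 4 ≤ n) (a : ZMod (2 * n)) :
    IsDiag (2 * n) {a, a + (n : ZMod (2 * n))} := by
  have : NeZero (2 * n) := ⟨by omega⟩
  have hne : ∀ j k : ℕ, j < 2 * n → k < 2 * n → j ≠ k →
      (j : ZMod (2 * n)) ≠ (k : ZMod (2 * n)) := by
    intro j k hj hk hjk h
    apply hjk
    rw [← zval n j hj, ← zval n k hk, h]
  refine ⟨a, a + n, rfl, ?_, ?_, ?_⟩
  · intro h
    exact hne n 0 (by omega) (by omega) (by omega) (by push_cast; linear_combination h)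
  · intro h
    exact hne n 1 (by omega) (by omega) (by omega) (by push_cast; linear_combination h)
  · intro h
    exact hne (n + 1) 0 (by omega) (by omega) (by omega) (by push_cast; linear_combination h)

/-- The type of diameters of the `2n`-gon. -/
abbrev Diam (n : ℕ) := {e : Finset (ZMod (2 * n)) // IsDiag (2 * n) e ∧ IsDiameter n e}

/-- The `a`-th diameter. -/
def mkDiam (n : ℕ) (hn : 4 ≤ n) (a : ZMod (2 * n)) : Diam n :=
  ⟨{a, a + n}, diam_isDiag n hn a, a, rfl⟩

theorem mkDiam_ne (n : ℕ) (hn : 4 ≤ n) (j k : ℕ) (hj : j < n) (hk : k < n) (hjk : j ≠ k) :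
    mkDiam n hn j ≠ mkDiam n hn k := by
  have : NeZero (2 * n) := ⟨by omega⟩
  intro h
  have h1 : ((j : ℕ) : ZMod (2 * n)) ∈ (mkDiam n hn k).1 := by
    rw [← h]; simp [mkDiam]
  simp only [mkDiam, Finset.mem_insert, Finset.mem_singleton] at h1
  rcases h1 with h1 | h1
  · have := congrArg ZMod.val h1
    rw [zval _ _ (by omega), zval _ _ (by omega)] at this
    exact hjk this
  · rw [← Nat.cast_add] at h1
    have := congrArg ZMod.val h1
    rw [zval _ _ (by omega), zval _ _ (by omega)] at this
    omega

theorem diam_three (n : ℕ) (hn : 4 ≤ n) (a : Diam n) : ∃ c₁ c₂ c₃ : Diam n,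
    c₁ ≠ a ∧ c₂ ≠ a ∧ c₃ ≠ a ∧ c₁ ≠ c₂ ∧ c₁ ≠ c₃ ∧ c₂ ≠ c₃ := by
  have h := mkDiam_ne n hn
  have h01 := h 0 1 (by omega) (by omega) (by omega)
  have h02 := h 0 2 (by omega) (by omega) (by omega)
  have h03 := h 0 3 (by omega) (by omega) (by omega)
  have h12 := h 1 2 (by omega) (by omega) (by omega)
  have h13 := h 1 3 (by omega) (by omega) (by omega)
  have h23 := h 2 3 (by omega) (by omega) (by omega)
  by_cases h0 : mkDiam n hn (0 : ℕ) = a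
  · exact ⟨_, _, _, fun h' => h01 (h0.trans h'.symm), fun h' => h02 (h0.trans h'.symm),
      fun h' => h03 (h0.trans h'.symm), h12, h13, h23⟩
  by_cases h1 : mkDiam n hn (1 : ℕ) = a
  · exact ⟨_, _, _, h0, fun h' => h12 (h1.trans h'.symm),
      fun h' => h13 (h1.trans h'.symm), h02, h03, h23⟩
  by_cases h2 : mkDiam n hn (2 : ℕ) = a
  · exact ⟨_, _, _, h0, h1, fun h' => h23 (h2.trans h'.symm), h01, h03, h13⟩
  · exact ⟨_, _, _, h0, h1, h2, h01, h02, h12⟩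

theorem faces_inter_iff {d : ℕ} {P F G : Set (Fin d → ℝ)} (hF : IsFaceOf F P)
    (hG : IsFaceOf G P) : (F ∩ G).Nonempty ↔ ∃ H, IsFaceOf H P ∧ H ⊆ F ∧ H ⊆ G :=
  ⟨fun h => ⟨F ∩ G, ⟨h, hF.2.inter hG.2⟩, Set.inter_subset_left, Set.inter_subset_right⟩,
    fun ⟨_, hH, h1, h2⟩ => hH.1.mono (Set.subset_inter h1 h2)⟩

/-- generalized associahedra of type `D_n` are not nestohedra for `n ≥ 4`. -/
theorem typeD_not_nestohedron (n d : ℕ) (hn : 4 ≤ n) (P : Set (Fin d → ℝ))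
    (hP : RealizesD n P) :
    ¬ ∃ (m : ℕ) (B : Finset (Finset (Fin m))),
        IsConnectedBuildingSet m B ∧ CombEquiv P (nestohedron m B) := by
  rintro ⟨m, B, hB, ⟨Ψ⟩⟩
  obtain ⟨φ, hPoly, -, -, hfac, hinj, hsurj, hcomp⟩ := hP
  set Q := nestohedron m B with hQ
  -- the top faces
  let r₀ : MSet n := ⟨.red (mkDiam n hn 0).1, (mkDiam n hn 0).2⟩
  have hPne : P.Nonempty := (hfac r₀).1.1.mono (hfac r₀).1.2.subset
  have hPtop : IsFaceOf P P := ⟨hPne, IsExposed.refl P⟩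
  have hQne : Q.Nonempty := (minFace_isFace hB hB.ground_mem).1.mono fun x hx => hx.1
  have hQtop : IsFaceOf Q Q := ⟨hQne, IsExposed.refl Q⟩
  have hΨtop : Ψ ⟨P, hPtop⟩ = ⟨Q, hQtop⟩ := by
    apply le_antisymm
    · exact (Ψ ⟨P, hPtop⟩).2.2.subset
    · rw [← Ψ.symm_apply_le]
      exact (Ψ.symm ⟨Q, hQtop⟩).2.2.subset
  have hΨne : ∀ F : {F // IsFaceOf F P}, F.1 ≠ P ↔ (Ψ F).1 ≠ Q := by
    intro F
    rw [not_iff_not]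
    constructor
    · intro h
      have : F = ⟨P, hPtop⟩ := Subtype.ext h
      rw [this, hΨtop]
    · intro h
      have : Ψ F = Ψ ⟨P, hPtop⟩ := by rw [hΨtop]; exact Subtype.ext h
      rw [Ψ.injective this]
  -- facets correspond to building set elements
  have hσ : ∀ x : MSet n, ∃ S ∈ B, S ≠ Finset.univ ∧
      (Ψ ⟨φ x, (hfac x).1⟩).1 = minFace m B S := by
    intro x
    obtain ⟨S, hS, hSu, hsub⟩ := exists_minFace_of_proper hB (Ψ ⟨φ x, (hfac x).1⟩).2
      ((hΨne _).1 (facet_ne (hfac x)))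
    refine ⟨S, hS, hSu, ?_⟩
    have hle : (⟨φ x, (hfac x).1⟩ : {F // IsFaceOf F P}) ≤
        Ψ.symm ⟨minFace m B S, minFace_isFace hB hS⟩ := by
      rw [Ψ.le_symm_apply]; exact hsub
    have hne : (Ψ.symm ⟨minFace m B S, minFace_isFace hB hS⟩).1 ≠ P := by
      rw [hΨne, Ψ.apply_symm_apply]; exact minFace_ne hB hS hSu
    have := facet_maximal (hfac x) (Ψ.symm ⟨minFace m B S, minFace_isFace hB hS⟩).2 hle hne
    have e : (⟨φ x, (hfac x).1⟩ : {F // IsFaceOf F P}) =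
        Ψ.symm ⟨minFace m B S, minFace_isFace hB hS⟩ := Subtype.ext this
    rw [e, Ψ.apply_symm_apply]
  choose σ hσB hσu hσe using hσ
  have hσinj : Function.Injective σ := by
    intro x y hxy
    apply hinj
    have : Ψ ⟨φ x, (hfac x).1⟩ = Ψ ⟨φ y, (hfac y).1⟩ :=
      Subtype.ext (by rw [hσe, hσe, hxy])
    exact congrArg Subtype.val (Ψ.injective this)
  have hσsurj : ∀ S ∈ B, S ≠ Finset.univ → ∃ x, σ x = S := by
    intro S hS hSu
    set F := Ψ.symm ⟨minFace m B S, minFace_isFace hB hS⟩ with hFdef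
    have hΨF : Ψ F = ⟨minFace m B S, minFace_isFace hB hS⟩ := Ψ.apply_symm_apply _
    have hFf : IsFacetOf F.1 P := by
      refine facet_of_maximal hPoly F.2 ((hΨne F).2 ?_) ?_
      · rw [hΨF]; exact minFace_ne hB hS hSu
      · intro G hG hFG hGne
        obtain ⟨T, hT, hTu, hsub⟩ := exists_minFace_of_proper hB (Ψ ⟨G, hG⟩).2
          ((hΨne ⟨G, hG⟩).1 hGne)
        have hle : Ψ F ≤ Ψ ⟨G, hG⟩ := Ψ.monotone (show F ≤ ⟨G, hG⟩ from hFG)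
        have hle' : (Ψ F).1 ⊆ (Ψ ⟨G, hG⟩).1 := hle
        have hST : S = T := minFace_subset_eq hB hS hT hTu (by
          rw [hΨF] at hle'; exact hle'.trans hsub)
        subst hST
        have : Ψ F = Ψ ⟨G, hG⟩ := Subtype.ext (hle'.antisymm (by rw [hΨF]; exact hsub))
        rw [Ψ.injective this]
    obtain ⟨x, hx⟩ := hsurj _ hFf
    refine ⟨x, minFace_subset_eq hB (hσB x) hS hSu ?_⟩
    have e : (⟨φ x, (hfac x).1⟩ : {F // IsFaceOf F P}) = F := Subtype.ext hx
    rw [← hσe, e, hΨF]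
  have hC : ∀ x y, x ≠ y → (Comp B (σ x) (σ y) ↔ DCompat n x.1 y.1) := by
    intro x y hxy
    rw [← hcomp x y hxy, ← minFace_inter_nonempty_iff hB (hσB x) (hσB y), ← hσe, ← hσe,
      faces_inter_iff (Ψ ⟨φ x, (hfac x).1⟩).2 (Ψ ⟨φ y, (hfac y).1⟩).2,
      faces_inter_iff (hfac x).1 (hfac y).1]
    constructor
    · rintro ⟨H, hH, h1, h2⟩
      refine ⟨(Ψ.symm ⟨H, hH⟩).1, (Ψ.symm ⟨H, hH⟩).2, ?_, ?_⟩
      · have : Ψ.symm ⟨H, hH⟩ ≤ ⟨φ x, (hfac x).1⟩ := (Ψ.symm_apply_le).2 h1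
        exact this
      · have : Ψ.symm ⟨H, hH⟩ ≤ ⟨φ y, (hfac y).1⟩ := (Ψ.symm_apply_le).2 h2
        exact this
    · rintro ⟨H, hH, h1, h2⟩
      refine ⟨(Ψ ⟨H, hH⟩).1, (Ψ ⟨H, hH⟩).2, ?_, ?_⟩
      · exact Ψ.monotone (show (⟨H, hH⟩ : {F // IsFaceOf F P}) ≤ ⟨φ x, (hfac x).1⟩ from h1)
      · exact Ψ.monotone (show (⟨H, hH⟩ : {F // IsFaceOf F P}) ≤ ⟨φ y, (hfac y).1⟩ from h2)
  let R : Diam n → MSet n := fun a => ⟨.red a.1, a.2⟩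
  let L : Diam n → MSet n := fun a => ⟨.blue a.1, a.2⟩
  have hR : Function.Injective R := by
    intro a c h
    have := congrArg Subtype.val h
    exact Subtype.ext (DElem.red.inj this)
  have hL : Function.Injective L := by
    intro a c h
    have := congrArg Subtype.val h
    exact Subtype.ext (DElem.blue.inj this)
  have hRL : ∀ a c, R a ≠ L c := by
    intro a c h
    have := congrArg Subtype.val h
    exact DElem.noConfusion rfl (heq_of_eq this)
  let M : ModelData B (MSet n) (Diam n) :=
    { σ := σ
      R := R
      L := L
      mem := hσB
      ne_univ := hσu
      inj := hσinj
      surj := hσsurj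
      Rinj := hR
      Linj := hL
      RL := hRL
      compR := by
        intro a c
        by_cases h : a = c
        · subst h; exact Or.inl (Finset.Subset.refl _)
        · exact (hC _ _ (fun h' => h (hR h'))).2 trivial
      compL := by
        intro a c
        by_cases h : a = c
        · subst h; exact Or.inl (Finset.Subset.refl _)
        · exact (hC _ _ (fun h' => h (hL h'))).2 trivial
      compRL := by
        intro a c
        rw [hC _ _ (hRL a c)]
        exact ⟨fun h => Subtype.ext h, fun h => congrArg Subtype.val h⟩
      cases := by
        rintro ⟨x | x | x, hx⟩
        · right; right
          have hne1 : ∀ a, (⟨.pair x, hx⟩ : MSet n) ≠ R a := by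
            intro a h
            have := congrArg Subtype.val h
            exact DElem.noConfusion rfl (heq_of_eq this)
          have hne2 : ∀ a, (⟨.pair x, hx⟩ : MSet n) ≠ L a := by
            intro a h
            have := congrArg Subtype.val h
            exact DElem.noConfusion rfl (heq_of_eq this)
          refine ⟨fun a => ?_, ?_⟩
          · rw [hC _ _ (hne1 a), hC _ _ (hne2 a)]
            exact Iff.rfl
          · obtain ⟨e, he, hed, hxe⟩ := id hx
            obtain ⟨c, hc⟩ := exists_crossing n hn e he hed
            refine ⟨mkDiam n hn c, fun h => ?_⟩
            rw [hC _ _ (hne1 _)] at h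
            exact h e (by rw [hxe]; simp) hc
        · exact Or.inl ⟨⟨x, hx⟩, rfl⟩
        · exact Or.inr (Or.inl ⟨⟨x, hx⟩, rfl⟩) }
  exact M.false hB (diam_three n hn) (mkDiam n hn 0)

end GalD
end

section
/- Let P be a polytope of dimension n that is not combinatorially equivalent to any product Q × R of two polytopes each of dimension at least 1, and suppose P has at least 2n + 3 facets each of which (regarded as a polytope) is also not combinatorially equivalent to any product of two polytopes each of dimension at least 1. Then P is not combinatorially equivalent to the nestohedron P_B of any connected building set B on any ground set [m]. -/
open Pointwise

namespace GalD

/-! ### Basic face theory -/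

theorem face_trans {d : ℕ} {P F G : Set (Fin d → ℝ)} (hP : IsPolytope P)
    (hF : IsFaceOf F P) (hG : IsFaceOf G F) : IsFaceOf G P := by
  obtain ⟨V, hV⟩ := hP
  obtain ⟨l, hl⟩ := hF.2 hF.1
  obtain ⟨k, hk⟩ := hG.2 hG.1
  refine ⟨hG.1, fun _ => ?_⟩
  obtain ⟨g, hg⟩ := hG.1
  have hgF : g ∈ F := by rw [hk] at hg; exact hg.1
  have hgP : g ∈ P := by rw [hl] at hgF; exact hgF.1
  have hmax : ∀ y ∈ P, l y ≤ l g := by rw [hl] at hgF; exact hgF.2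
  have hkmax : ∀ y ∈ F, k y ≤ k g := by rw [hk] at hg; exact hg.2
  have hmemF : ∀ y ∈ P, l y = l g → y ∈ F := by
    intro y hy h
    rw [hl]
    exact ⟨hy, fun z hz => h ▸ hmax z hz⟩
  have hVP : ∀ v ∈ V, v ∈ P := fun v hv => hV ▸ subset_convexHull ℝ _ hv
  obtain ⟨N, hN0, hN⟩ : ∃ N : ℝ, 0 ≤ N ∧ ∀ v ∈ V, N * l v + k v ≤ N * l g + k g := by
    have hex : ∀ v : Fin d → ℝ, ∃ N : ℝ, v ∈ V → ∀ N', N ≤ N' →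
        N' * l v + k v ≤ N' * l g + k g := by
      intro v
      by_cases hv : v ∈ V
      · rcases (hmax v (hVP v hv)).lt_or_eq with h | h
        · refine ⟨(k v - k g) / (l g - l v), fun _ N' hN' => ?_⟩
          rw [div_le_iff₀ (by linarith)] at hN'
          linarith
        · refine ⟨0, fun _ N' _ => ?_⟩
          have := hkmax v (hmemF v (hVP v hv) h)
          rw [h]; linarith
      · exact ⟨0, fun h => absurd h hv⟩
    choose f hf using hex
    refine ⟨∑ v ∈ V, |f v|, Finset.sum_nonneg fun _ _ => abs_nonneg _, fun v hv => ?_⟩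
    refine hf v hv _ ((le_abs_self _).trans ?_)
    exact Finset.single_le_sum (f := fun v => |f v|) (fun _ _ => abs_nonneg _) hv
  have hNP : ∀ y ∈ P, N * l y + k y ≤ N * l g + k g := by
    intro y hy
    have hc : Convex ℝ {y : Fin d → ℝ | (N • l + k) y ≤ N * l g + k g} :=
      convex_halfSpace_le (N • l + k).toLinearMap.isLinear _
    have hsub : P ⊆ {y : Fin d → ℝ | (N • l + k) y ≤ N * l g + k g} := by
      rw [hV]
      refine convexHull_min (fun v hv => ?_) hc
      simpa using hN v hv
    simpa using hsub hy
  refine ⟨(N + 1) • l + k, ?_⟩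
  ext x
  simp only [Set.mem_ofPred_eq, add_apply, smul_apply,
    smul_eq_mul]
  constructor
  · intro hx
    rw [hk] at hx
    have hxF := hx.1
    have h1 := hx.2 g hgF
    have h2 := hkmax x hxF
    rw [hl] at hxF
    have h3 := hxF.2 g hgP
    have h4 := hmax x hxF.1
    have e1 : l x = l g := le_antisymm h4 h3
    have e2 : k x = k g := le_antisymm h2 h1
    refine ⟨hxF.1, fun y hy => ?_⟩
    have := hNP y hy
    have := hmax y hy
    rw [e1, e2]; linarith
  · rintro ⟨hxP, hx⟩
    have h1 := hx g hgP
    have h2 := hNP x hxP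
    have h3 := hmax x hxP
    have e1 : l x = l g := le_antisymm h3 (by linarith)
    rw [e1] at h1
    have hxF := hmemF x hxP e1
    rw [hk]
    exact ⟨hxF, fun y hy => (hkmax y hy).trans (by linarith)⟩

theorem face_sub {d : ℕ} {F P : Set (Fin d → ℝ)} (hF : IsFaceOf F P) : F ⊆ P := by
  obtain ⟨l, hl⟩ := hF.2 hF.1
  rw [hl]; exact fun x hx => hx.1

theorem face_restrict {d : ℕ} {P F G : Set (Fin d → ℝ)}
    (hF : IsFaceOf F P) (hG : IsFaceOf G P) (h : G ⊆ F) : IsFaceOf G F := by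
  refine ⟨hG.1, fun _ => ?_⟩
  obtain ⟨l, hl⟩ := hG.2 hG.1
  obtain ⟨g, hg⟩ := hG.1
  have hgF := h hg
  refine ⟨l, ?_⟩
  ext x
  constructor
  · intro hx
    refine ⟨h hx, fun y hy => ?_⟩
    rw [hl] at hx
    exact hx.2 y (face_sub hF hy)
  · rintro ⟨hx, hx2⟩
    rw [hl] at hg ⊢
    exact ⟨face_sub hF hx, fun y hy => (hg.2 y hy).trans (hx2 g hgF)⟩

theorem face_self {d : ℕ} {P : Set (Fin d → ℝ)} (h : P.Nonempty) : IsFaceOf P P :=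
  ⟨h, IsExposed.refl _ ⟩

theorem polyDim_lt {d : ℕ} {P F G : Set (Fin d → ℝ)}
    (hF : IsFaceOf F P) (hG : IsFaceOf G P) (h : F ⊂ G) : polyDim F < polyDim G := by
  obtain ⟨l, hl⟩ := hF.2 hF.1
  obtain ⟨x0, hx0⟩ := hF.1
  obtain ⟨z, hzG, hzF⟩ := Set.exists_of_ssubset h
  unfold polyDim
  rw [direction_affineSpan, direction_affineSpan]
  apply Submodule.finrank_lt_finrank_of_lt
  refine lt_of_le_of_ne (vectorSpan_mono ℝ h.1) fun heq => hzF ?_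
  have hker : vectorSpan ℝ F ≤ LinearMap.ker l.toLinearMap := by
    refine Submodule.span_le.2 ?_
    rintro _ ⟨a, ha, b, hb, rfl⟩
    rw [hl] at ha hb
    have := le_antisymm (hb.2 a ha.1) (ha.2 b hb.1)
    simp [this]
  have hz : z -ᵥ x0 ∈ vectorSpan ℝ F := heq ▸ vsub_mem_vectorSpan ℝ hzG (h.1 hx0)
  have hz2 := hker hz
  simp [sub_eq_zero] at hz2
  rw [hl] at hx0 ⊢
  exact ⟨face_sub hG hzG, fun y hy => hz2 ▸ hx0.2 y hy⟩

/-- Faces of a face. -/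
def faceIic {d : ℕ} {P F : Set (Fin d → ℝ)} (hP : IsPolytope P) (hF : IsFaceOf F P) :
    {G : Set (Fin d → ℝ) // IsFaceOf G F} ≃o
      Set.Iic (⟨F, hF⟩ : {G : Set (Fin d → ℝ) // IsFaceOf G P}) where
  toFun G := ⟨⟨G.1, face_trans hP hF G.2⟩, face_sub G.2⟩
  invFun G := ⟨G.1.1, face_restrict hF G.1.2 G.2⟩
  left_inv _ := rfl
  right_inv _ := rfl
  map_rel_iff' := Iff.rfl

theorem combEquiv_face {d e : ℕ} {P : Set (Fin d → ℝ)} {Q : Set (Fin e → ℝ)}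
    (hP : IsPolytope P) (hQ : IsPolytope Q)
    (φ : {F : Set (Fin d → ℝ) // IsFaceOf F P} ≃o {G : Set (Fin e → ℝ) // IsFaceOf G Q})
    (F : {F : Set (Fin d → ℝ) // IsFaceOf F P}) : CombEquiv F.1 (φ F).1 := by
  have mid : Set.Iic F ≃o Set.Iic (φ F) :=
    { toFun := fun G => ⟨φ G.1, φ.monotone G.2⟩
      invFun := fun G => ⟨φ.symm G.1, by
        have := φ.symm.monotone G.2
        simpa using this⟩
      left_inv := fun G => by simp
      right_inv := fun G => by simp
      map_rel_iff' := by
        intro a b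
        exact φ.le_iff_le }
  exact ⟨((faceIic hP F.2).trans mid).trans (faceIic hQ (φ F).2).symm⟩

theorem face_image {d e : ℕ} (L : (Fin d → ℝ) →L[ℝ] (Fin e → ℝ))
    (M : (Fin e → ℝ) →L[ℝ] (Fin d → ℝ)) (hML : ∀ x, M (L x) = x)
    {P F : Set (Fin d → ℝ)} (hF : IsFaceOf F P) : IsFaceOf (L '' F) (L '' P) := by
  refine ⟨hF.1.image _, fun _ => ?_⟩
  obtain ⟨l, hl⟩ := hF.2 hF.1
  refine ⟨l.comp M, ?_⟩
  ext y
  constructor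
  · rintro ⟨x, hx, rfl⟩
    rw [hl] at hx
    refine ⟨⟨x, hx.1, rfl⟩, ?_⟩
    rintro _ ⟨z, hz, rfl⟩
    simpa [hML] using hx.2 z hz
  · rintro ⟨⟨x, hx, rfl⟩, h⟩
    refine ⟨x, ?_, rfl⟩
    rw [hl]
    refine ⟨hx, fun z hz => ?_⟩
    simpa [hML] using h _ ⟨z, hz, rfl⟩

theorem face_of_image {d e : ℕ} (L : (Fin d → ℝ) →L[ℝ] (Fin e → ℝ))
    (M : (Fin e → ℝ) →L[ℝ] (Fin d → ℝ)) (hML : ∀ x, M (L x) = x)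
    {P : Set (Fin d → ℝ)} {G : Set (Fin e → ℝ)} (hG : IsFaceOf G (L '' P)) :
    IsFaceOf (M '' G) P := by
  refine ⟨hG.1.image _, fun _ => ?_⟩
  obtain ⟨l, hl⟩ := hG.2 hG.1
  refine ⟨l.comp L, ?_⟩
  ext x
  constructor
  · rintro ⟨y, hy, rfl⟩
    rw [hl] at hy
    obtain ⟨⟨z, hz, rfl⟩, h⟩ := hy
    rw [hML]
    refine ⟨hz, fun w hw => h _ ⟨w, hw, rfl⟩⟩
  · rintro ⟨hx, h⟩
    refine ⟨L x, ?_, hML x⟩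
    rw [hl]
    refine ⟨⟨x, hx, rfl⟩, ?_⟩
    rintro _ ⟨z, hz, rfl⟩
    exact h z hz

theorem combEquiv_image {d e : ℕ} (L : (Fin d → ℝ) →L[ℝ] (Fin e → ℝ))
    (M : (Fin e → ℝ) →L[ℝ] (Fin d → ℝ)) (hML : ∀ x, M (L x) = x)
    (P : Set (Fin d → ℝ)) : CombEquiv P (L '' P) := by
  refine ⟨{ toFun := fun F => ⟨L '' F.1, face_image L M hML F.2⟩
            invFun := fun G => ⟨M '' G.1, face_of_image L M hML G.2⟩
            left_inv := ?_
            right_inv := ?_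
            map_rel_iff' := ?_ }⟩
  · intro F
    apply Subtype.ext
    simp [Set.image_image, hML]
  · intro G
    apply Subtype.ext
    ext y
    simp only [Set.image_image, Set.mem_image]
    have key : ∀ y ∈ G.1, L (M y) = y := by
      intro y hy
      obtain ⟨z, hz, rfl⟩ := face_sub G.2 hy
      rw [hML]
    constructor
    · rintro ⟨z, hz, rfl⟩
      rw [key z hz]; exact hz
    · intro hy
      exact ⟨y, hy, key y hy⟩
  · intro F G
    have hinj : Function.Injective L := fun a b h => by rw [← hML a, h, hML]
    exact Set.image_subset_image_iff hinj

theorem CombEquiv.comp {d e f : ℕ} {P : Set (Fin d → ℝ)} {Q : Set (Fin e → ℝ)}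
    {R : Set (Fin f → ℝ)} (h : CombEquiv P Q) (h' : CombEquiv Q R) : CombEquiv P R := by
  obtain ⟨a⟩ := h
  obtain ⟨b⟩ := h'
  exact ⟨a.trans b⟩

/-! ### Faces of nestohedra -/

/-- The simplex `Δ_T`. -/
def dl {m : ℕ} (T : Finset (Fin m)) : Set (Fin m → ℝ) :=
  convexHull ℝ ((fun i => (Pi.single i 1 : Fin m → ℝ)) '' (T : Set (Fin m)))

theorem mem_dl {m : ℕ} {T : Finset (Fin m)} {x : Fin m → ℝ} :
    x ∈ dl T ↔ (∀ i, 0 ≤ x i) ∧ ∑ i, x i = 1 ∧ ∀ i, i ∉ T → x i = 0 := by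
  constructor
  · intro hx
    have hsub : dl T ⊆ {x | (∀ i, 0 ≤ x i) ∧ ∑ i, x i = 1 ∧ ∀ i, i ∉ T → x i = 0} := by
      refine convexHull_min ?_ ?_
      · rintro _ ⟨i, hi, rfl⟩
        refine ⟨fun j => ?_, ?_, fun j hj => ?_⟩
        · by_cases h : j = i
          · subst h; simp
          · simp [Pi.single_eq_of_ne h]
        · simp
        · have h : j ≠ i := fun h => hj (h ▸ hi)
          simp [Pi.single_eq_of_ne h]
      · rintro x ⟨h1, h2, h3⟩ y ⟨h1', h2', h3'⟩ a b ha hb hab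
        refine ⟨fun j => ?_, ?_, fun j hj => ?_⟩
        · have := mul_nonneg ha (h1 j)
          have := mul_nonneg hb (h1' j)
          simp; linarith
        · simp [Finset.sum_add_distrib, ← Finset.mul_sum, h2, h2', hab]
        · simp [h3 j hj, h3' j hj]
    exact hsub hx
  · rintro ⟨h1, h2, h3⟩
    have hs : ∑ i ∈ T, x i = 1 := by
      rw [← h2]
      exact Finset.sum_subset (Finset.subset_univ _) fun i _ hi => h3 i hi
    have hx : x = ∑ i ∈ T, x i • (Pi.single i 1 : Fin m → ℝ) := by
      ext j
      simp only [Finset.sum_apply, Pi.smul_apply, Pi.single_apply, smul_eq_mul, mul_ite, mul_one,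
        mul_zero]
      rw [Finset.sum_ite_eq]
      split_ifs with h
      · rfl
      · exact h3 j h
    rw [hx]
    refine (convex_convexHull ℝ _).sum_mem (fun i _ => h1 i) hs fun i hi => ?_
    exact subset_convexHull ℝ _ ⟨i, hi, rfl⟩

theorem single_mem_dl {m : ℕ} {T : Finset (Fin m)} {i : Fin m} (hi : i ∈ T) :
    (Pi.single i 1 : Fin m → ℝ) ∈ dl T :=
  subset_convexHull ℝ _ ⟨i, hi, rfl⟩

theorem dl_mono {m : ℕ} {T U : Finset (Fin m)} (h : T ⊆ U) : dl T ⊆ dl U :=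
  convexHull_mono (Set.image_mono (by exact_mod_cast h))

/-- The linear functional with coefficients `a`. -/
def dot {m : ℕ} (a x : Fin m → ℝ) : ℝ := ∑ i, a i * x i

theorem dot_single {m : ℕ} (a : Fin m → ℝ) (i : Fin m) : dot a (Pi.single i 1) = a i := by
  simp [dot, Pi.single_apply]

theorem dot_sum {m : ℕ} {ι : Type*} (a : Fin m → ℝ) (I : Finset ι) (g : ι → Fin m → ℝ) :
    dot a (∑ T ∈ I, g T) = ∑ T ∈ I, dot a (g T) := by
  unfold dot
  rw [Finset.sum_comm]
  simp [Finset.mul_sum]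

/-- The elements of `T` where `a` is maximal. -/
noncomputable def am {m : ℕ} (a : Fin m → ℝ) (T : Finset (Fin m)) : Finset (Fin m) :=
  open Classical in T.filter (fun i => ∀ j ∈ T, a j ≤ a i)

theorem mem_am {m : ℕ} {a : Fin m → ℝ} {T : Finset (Fin m)} {i : Fin m} :
    i ∈ am a T ↔ i ∈ T ∧ ∀ j ∈ T, a j ≤ a i := by
  simp [am]

theorem am_nonempty {m : ℕ} (a : Fin m → ℝ) {T : Finset (Fin m)} (hT : T.Nonempty) :
    (am a T).Nonempty := by
  obtain ⟨i, hi, h⟩ := Finset.exists_max_image T a hT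
  exact ⟨i, mem_am.2 ⟨hi, h⟩⟩

theorem dl_max {m : ℕ} {a : Fin m → ℝ} {T : Finset (Fin m)} (hT : T.Nonempty)
    {x : Fin m → ℝ} (hx : x ∈ dl T) (h : ∀ j ∈ T, a j ≤ dot a x) : x ∈ dl (am a T) := by
  obtain ⟨j, hj⟩ := am_nonempty a hT
  obtain ⟨hjT, hjm⟩ := mem_am.1 hj
  obtain ⟨h1, h2, h3⟩ := mem_dl.1 hx
  refine mem_dl.2 ⟨h1, h2, fun i hi => ?_⟩
  by_cases hiT : i ∈ T
  swap
  · exact h3 i hiT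
  have hnn : ∀ i ∈ Finset.univ, 0 ≤ (a j - a i) * x i := by
    intro i _
    by_cases hiT : i ∈ T
    · exact mul_nonneg (sub_nonneg.2 (hjm i hiT)) (h1 i)
    · simp [h3 i hiT]
  have hs : ∑ i, (a j - a i) * x i = a j - dot a x := by
    simp [sub_mul, Finset.sum_sub_distrib, ← Finset.mul_sum, h2, dot]
  have h0 : ∑ i, (a j - a i) * x i = 0 :=
    le_antisymm (by rw [hs]; linarith [h j hjT]) (Finset.sum_nonneg hnn)
  have := (Finset.sum_eq_zero_iff_of_nonneg hnn).1 h0 i (Finset.mem_univ _)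
  rcases mul_eq_zero.1 this with h | h
  · exact absurd (mem_am.2 ⟨hiT, fun k hk => by linarith [hjm k hk]⟩) hi
  · exact h

theorem dl_le {m : ℕ} {a : Fin m → ℝ} {T : Finset (Fin m)} {c : ℝ} {x : Fin m → ℝ}
    (hx : x ∈ dl T) (h : ∀ i ∈ T, a i ≤ c) : dot a x ≤ c := by
  obtain ⟨h1, h2, h3⟩ := mem_dl.1 hx
  calc dot a x ≤ ∑ i, c * x i := by
        refine Finset.sum_le_sum fun i _ => ?_
        by_cases hi : i ∈ T
        · exact mul_le_mul_of_nonneg_right (h i hi) (h1 i)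
        · simp [h3 i hi]
    _ = c := by rw [← Finset.mul_sum, h2, mul_one]

theorem dl_ge {m : ℕ} {a : Fin m → ℝ} {T : Finset (Fin m)} {c : ℝ} {x : Fin m → ℝ}
    (hx : x ∈ dl T) (h : ∀ i ∈ T, c ≤ a i) : c ≤ dot a x := by
  have := dl_le (a := fun i => - a i) (c := -c) hx fun i hi => neg_le_neg (h i hi)
  simp [dot] at this ⊢
  exact this

theorem dl_am_ge {m : ℕ} {a : Fin m → ℝ} {T : Finset (Fin m)} {x y : Fin m → ℝ}
    (hx : x ∈ dl (am a T)) (hy : y ∈ dl T) : dot a y ≤ dot a x :=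
  dl_le hy fun j hj => dl_ge hx fun _ hi => (mem_am.1 hi).2 j hj

/-- The face of the nestohedron maximizing `a`. -/
def fc {m : ℕ} (B : Finset (Finset (Fin m))) (a : Fin m → ℝ) : Set (Fin m → ℝ) :=
  {x | x ∈ nestohedron m B ∧ ∀ y ∈ nestohedron m B, dot a y ≤ dot a x}

theorem mem_nest {m : ℕ} {B : Finset (Finset (Fin m))} {x : Fin m → ℝ} :
    x ∈ nestohedron m B ↔ ∃ g : Finset (Fin m) → Fin m → ℝ,
      (∀ T ∈ B, g T ∈ dl T) ∧ ∑ T ∈ B, g T = x := by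
  unfold nestohedron
  rw [Set.mem_finsetSum]
  constructor
  · rintro ⟨g, hg, h⟩
    exact ⟨g, fun T hT => hg hT, h⟩
  · rintro ⟨g, hg, h⟩
    exact ⟨g, fun {T} hT => hg T hT, h⟩

theorem fc_term {m : ℕ} {B : Finset (Finset (Fin m))} {a : Fin m → ℝ}
    {g : Finset (Fin m) → Fin m → ℝ} (hg : ∀ T ∈ B, g T ∈ dl T)
    (h : ∑ T ∈ B, g T ∈ fc B a) {T : Finset (Fin m)} (hT : T ∈ B) {y : Fin m → ℝ}
    (hy : y ∈ dl T) : dot a y ≤ dot a (g T) := by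
  have hmem : ∑ U ∈ B, Function.update g T y U ∈ nestohedron m B := by
    refine mem_nest.2 ⟨_, fun U hU => ?_, rfl⟩
    by_cases hUT : U = T
    · subst hUT; simpa using hy
    · simpa [Function.update_of_ne hUT] using hg U hU
  have := h.2 _ hmem
  rw [dot_sum, dot_sum, ← Finset.add_sum_erase B _ hT, ← Finset.add_sum_erase B _ hT] at this
  have he : ∑ U ∈ B.erase T, dot a (Function.update g T y U) = ∑ U ∈ B.erase T, dot a (g U) := by
    refine Finset.sum_congr rfl fun U hU => ?_
    rw [Function.update_of_ne (Finset.ne_of_mem_erase hU)]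
  rw [he, Function.update_self] at this
  linarith

theorem fc_eq {m : ℕ} {B : Finset (Finset (Fin m))} (hB : ∀ T ∈ B, T.Nonempty)
    (a : Fin m → ℝ) : fc B a = ∑ T ∈ B, dl (am a T) := by
  ext x
  rw [Set.mem_finsetSum]
  constructor
  · intro hx
    obtain ⟨g, hg, rfl⟩ := mem_nest.1 hx.1
    refine ⟨g, fun {T} hT => dl_max (hB T hT) (hg T hT) fun j hj => ?_, rfl⟩
    rw [← dot_single a j]
    exact fc_term hg hx hT (single_mem_dl hj)
  · rintro ⟨g, hg, rfl⟩
    refine ⟨mem_nest.2 ⟨g, fun T hT => dl_mono (fun i hi => (mem_am.1 hi).1) (hg hT), rfl⟩, ?_⟩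
    intro y hy
    obtain ⟨h, hh, rfl⟩ := mem_nest.1 hy
    rw [dot_sum, dot_sum]
    exact Finset.sum_le_sum fun T hT => dl_am_ge (hg hT) (hh T hT)

theorem fc_strict {m : ℕ} {B : Finset (Finset (Fin m))} (hB : ∀ T ∈ B, T.Nonempty)
    (hu : Finset.univ ∈ B) (a c : Fin m → ℝ) {k j : Fin m} (hk : ∀ i, a i ≤ a k)
    (hkj : c k < c j) : ∃ x ∈ fc B a, x ∉ fc B c := by
  have hex : ∀ T : Finset (Fin m), ∃ b : Fin m, T ∈ B →
      b ∈ am a T ∧ (T = Finset.univ → b = k) := by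
    intro T
    by_cases hTu : T = Finset.univ
    · exact ⟨k, fun _ => ⟨mem_am.2 ⟨by simp [hTu], fun i _ => hk i⟩, fun _ => rfl⟩⟩
    · by_cases hT : T ∈ B
      · obtain ⟨b, hb⟩ := am_nonempty a (hB T hT)
        exact ⟨b, fun _ => ⟨hb, fun h => absurd h hTu⟩⟩
      · exact ⟨k, fun h => absurd h hT⟩
  choose b hb using hex
  refine ⟨∑ T ∈ B, Pi.single (b T) 1, ?_, fun h => ?_⟩
  · rw [fc_eq hB, Set.mem_finsetSum]
    exact ⟨_, fun {T} hT => single_mem_dl (hb T hT).1, rfl⟩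
  · have := fc_term (g := fun T => Pi.single (b T) 1)
      (fun T hT => single_mem_dl (mem_am.1 (hb T hT).1).1) h hu
      (single_mem_dl (Finset.mem_univ j))
    rw [dot_single, dot_single, (hb _ hu).2 rfl] at this
    linarith

theorem fc_mono {m : ℕ} {B : Finset (Finset (Fin m))} (hB : ∀ T ∈ B, T.Nonempty)
    {a c : Fin m → ℝ} (h : ∀ T ∈ B, am a T ⊆ am c T) : fc B a ⊆ fc B c := by
  rw [fc_eq hB, fc_eq hB]
  exact Set.finsetSum_subset_finsetSum _ _ _ fun T hT => dl_mono (h T hT)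

theorem fc_nonempty {m : ℕ} {B : Finset (Finset (Fin m))} (hB : ∀ T ∈ B, T.Nonempty)
    (a : Fin m → ℝ) : (fc B a).Nonempty := by
  rw [fc_eq hB]
  have hex : ∀ T : Finset (Fin m), ∃ x : Fin m → ℝ, T ∈ B → x ∈ dl (am a T) := by
    intro T
    by_cases hT : T ∈ B
    · obtain ⟨b, hb⟩ := am_nonempty a (hB T hT)
      exact ⟨_, fun _ => single_mem_dl hb⟩
    · exact ⟨0, fun h => absurd h hT⟩
  choose g hg using hex
  exact ⟨∑ T ∈ B, g T, (Set.mem_finsetSum _ _ _).2 ⟨g, fun {T} hT => hg T hT, rfl⟩⟩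

theorem fc_face {m : ℕ} {B : Finset (Finset (Fin m))} (hB : ∀ T ∈ B, T.Nonempty)
    (a : Fin m → ℝ) : IsFaceOf (fc B a) (nestohedron m B) := by
  refine ⟨fc_nonempty hB a, fun _ => ?_⟩
  refine ⟨∑ i, a i • ContinuousLinearMap.proj i, ?_⟩
  ext x
  simp [fc, dot]

theorem face_fc {m : ℕ} {B : Finset (Finset (Fin m))} {F : Set (Fin m → ℝ)}
    (hF : IsFaceOf F (nestohedron m B)) : ∃ a, F = fc B a := by
  obtain ⟨l, hl⟩ := hF.2 hF.1
  refine ⟨fun i => l (Pi.single i 1), ?_⟩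
  have hd : ∀ x, dot (fun i => l (Pi.single i 1)) x = l x := by
    intro x
    conv_rhs => rw [← Finset.univ_sum_single x]
    rw [map_sum]
    refine Finset.sum_congr rfl fun i _ => ?_
    have : (Pi.single i (x i) : Fin m → ℝ) = x i • Pi.single i 1 := by
      rw [← Pi.single_smul]; simp
    rw [this, map_smul, smul_eq_mul, mul_comm]
  rw [hl]
  simp [fc, hd]

/-- The functional `-∑_{i ∈ S} x i`. -/
noncomputable def negInd {m : ℕ} (S : Finset (Fin m)) : Fin m → ℝ :=
  fun i => if i ∈ S then -1 else 0

theorem fc_zero {m : ℕ} (B : Finset (Finset (Fin m))) : fc B 0 = nestohedron m B := by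
  ext x; simp [fc, dot]

theorem fc_const {m : ℕ} {B : Finset (Finset (Fin m))} (hB : ∀ T ∈ B, T.Nonempty)
    (a : Fin m → ℝ) (h : ∀ i j, a i ≤ a j) : fc B a = nestohedron m B := by
  refine Set.Subset.antisymm (fun x hx => hx.1) ?_
  rw [← fc_zero]
  refine fc_mono hB fun T hT i hi => mem_am.2 ⟨(mem_am.1 hi).1, fun j _ => h j i⟩

theorem proper_face_sub {m : ℕ} {B : Finset (Finset (Fin m))} (hB : IsConnectedBuildingSet m B)
    {F : Set (Fin m → ℝ)} (hF : IsFaceOf F (nestohedron m B)) (hne : F ≠ nestohedron m B) :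
    ∃ S ∈ B, S ≠ Finset.univ ∧ F ⊆ fc B (negInd S) := by
  classical
  obtain ⟨a, rfl⟩ := face_fc hF
  have hun := hB.nonempty_mem _ hB.ground_mem
  obtain ⟨t, _, ht⟩ := Finset.exists_max_image Finset.univ a hun
  obtain ⟨p, hp⟩ : ∃ p, a p < a t := by
    by_contra hcon
    push Not at hcon
    exact hne (fc_const hB.nonempty_mem a fun i j => (ht i (Finset.mem_univ _)).trans (hcon j))
  have hCne : (B.filter fun S => ∀ i ∈ S, a i < a t).Nonempty :=
    ⟨{p}, Finset.mem_filter.2 ⟨hB.singleton_mem p (Finset.mem_univ _), by simpa using hp⟩⟩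
  obtain ⟨S, hS, hmax⟩ := Finset.exists_max_image _ Finset.card hCne
  obtain ⟨hSB, hSa⟩ := Finset.mem_filter.1 hS
  refine ⟨S, hSB, ?_, fc_mono hB.nonempty_mem fun T hT i hi => ?_⟩
  · rintro rfl
    exact lt_irrefl _ (hSa t (Finset.mem_univ _))
  · obtain ⟨hiT, him⟩ := mem_am.1 hi
    refine mem_am.2 ⟨hiT, fun j hj => ?_⟩
    unfold negInd
    by_cases hiS : i ∈ S
    swap
    · simp only [hiS, if_false]
      split_ifs <;> norm_num
    by_cases hjS : j ∈ S
    · simp [hiS, hjS]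
    exfalso
    have hU := hB.union_mem S hSB T hT ⟨i, Finset.mem_inter.2 ⟨hiS, hiT⟩⟩
    have hlt : S.card < (S ∪ T).card := Finset.card_lt_card
      (Finset.ssubset_iff_of_subset Finset.subset_union_left |>.2
        ⟨j, Finset.mem_union_right _ hj, hjS⟩)
    have hUa : ∀ k ∈ S ∪ T, a k < a t := by
      intro k hk
      rcases Finset.mem_union.1 hk with hk | hk
      · exact hSa k hk
      · exact (him k hk).trans_lt (hSa i hiS)
    have := hmax _ (Finset.mem_filter.2 ⟨hU, hUa⟩)
    omega

theorem fc_negInd_ne {m : ℕ} {B : Finset (Finset (Fin m))} (hB : IsConnectedBuildingSet m B)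
    {S : Finset (Fin m)} (hS : S ∈ B) (hne : S ≠ Finset.univ) :
    fc B (negInd S) ≠ nestohedron m B := by
  obtain ⟨k, hk⟩ := hB.nonempty_mem S hS
  obtain ⟨j, hj⟩ : ∃ j, j ∉ S := by
    by_contra hcon
    push Not at hcon
    exact hne (Finset.eq_univ_iff_forall.2 hcon)
  obtain ⟨x, hx, hx'⟩ := fc_strict hB.nonempty_mem hB.ground_mem 0 (negInd S) (k := k) (j := j)
    (fun i => le_rfl) (by simp [negInd, hk, hj])
  intro h
  rw [fc_zero, ← h] at hx
  exact hx' hx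

theorem sum_dl_polytope {m : ℕ} (I : Finset (Finset (Fin m)))
    (h : Finset (Fin m) → Finset (Fin m)) : IsPolytope (∑ T ∈ I, dl (h T)) := by
  have hfin : (∑ T ∈ I, (fun i => (Pi.single i 1 : Fin m → ℝ)) ''
      (h T : Set (Fin m))).Finite := by
    classical
    induction I using Finset.induction_on with
    | empty => simp [Set.finite_zero]
    | insert a s ha ih =>
      rw [Finset.sum_insert ha]
      exact ((Finset.finite_toSet _).image _).add ih
  refine ⟨hfin.toFinset, ?_⟩
  rw [Set.Finite.coe_toFinset, convexHull_sum]
  rfl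

theorem one_le_polyDim {d : ℕ} {A : Set (Fin d → ℝ)} {x y : Fin d → ℝ} (hx : x ∈ A)
    (hy : y ∈ A) (h : x ≠ y) : 1 ≤ polyDim A := by
  unfold polyDim
  rw [direction_affineSpan, Nat.one_le_iff_ne_zero]
  intro h0
  have := vsub_mem_vectorSpan ℝ hx hy
  rw [Submodule.finrank_eq_zero.1 h0] at this
  simp [sub_eq_zero] at this
  exact h this

theorem sum_dl_dim {m : ℕ} (I : Finset (Finset (Fin m)))
    (h : Finset (Fin m) → Finset (Fin m)) (hne : ∀ T ∈ I, (h T).Nonempty)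
    {T₀ : Finset (Fin m)} (hT₀ : T₀ ∈ I) {p q : Fin m} (hp : p ∈ h T₀) (hq : q ∈ h T₀)
    (hpq : p ≠ q) : 1 ≤ polyDim (∑ T ∈ I, dl (h T)) := by
  have hex : ∀ T : Finset (Fin m), ∃ x : Fin m → ℝ, T ∈ I → x ∈ dl (h T) := by
    intro T
    by_cases hT : T ∈ I
    · obtain ⟨b, hb⟩ := hne T hT
      exact ⟨_, fun _ => single_mem_dl hb⟩
    · exact ⟨0, fun h => absurd h hT⟩
  choose g hg using hex
  have key : ∀ r ∈ h T₀, ∑ U ∈ I, Function.update g T₀ (Pi.single r 1) U ∈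
      ∑ T ∈ I, dl (h T) := by
    intro r hr
    rw [Set.mem_finsetSum]
    refine ⟨_, fun {U} hU => ?_, rfl⟩
    by_cases hUT : U = T₀
    · subst hUT; simpa using single_mem_dl hr
    · simpa [Function.update_of_ne hUT] using hg U hU
  refine one_le_polyDim (key p hp) (key q hq) fun heq => ?_
  rw [← Finset.add_sum_erase I _ hT₀, ← Finset.add_sum_erase I _ hT₀] at heq
  have he : ∀ y, ∑ U ∈ I.erase T₀, Function.update g T₀ y U = ∑ U ∈ I.erase T₀, g U := by
    intro y
    refine Finset.sum_congr rfl fun U hU => ?_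
    rw [Function.update_of_ne (Finset.ne_of_mem_erase hU)]
  rw [he, he, Function.update_self, Function.update_self] at heq
  have := congrFun (add_right_cancel heq) p
  simp [Pi.single_apply, hpq] at this

theorem sum_dl_supp {m : ℕ} (I : Finset (Finset (Fin m)))
    (h : Finset (Fin m) → Finset (Fin m)) {i : Fin m} (hi : ∀ T ∈ I, i ∉ h T)
    {x : Fin m → ℝ} (hx : x ∈ ∑ T ∈ I, dl (h T)) : x i = 0 := by
  rw [Set.mem_finsetSum] at hx
  obtain ⟨g, hg, rfl⟩ := hx
  rw [Finset.sum_apply]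
  exact Finset.sum_eq_zero fun T hT => (mem_dl.1 (hg hT)).2.2 i (hi T hT)

/-- Splitting a vector into its `S`-part and `Sᶜ`-part. -/
noncomputable def splitL {m : ℕ} (S : Finset (Fin m)) :
    (Fin m → ℝ) →L[ℝ] (Fin (m + m) → ℝ) :=
  LinearMap.toContinuousLinearMap
    { toFun := fun x => Fin.append (fun i => if i ∈ S then x i else 0)
        (fun i => if i ∈ S then 0 else x i)
      map_add' := by
        intro x y
        ext i
        refine Fin.addCases (fun i => ?_) (fun i => ?_) i
        · simp only [Fin.append_left, Pi.add_apply]; split_ifs <;> simp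
        · simp only [Fin.append_right, Pi.add_apply]; split_ifs <;> simp
      map_smul' := by
        intro c x
        ext i
        refine Fin.addCases (fun i => ?_) (fun i => ?_) i
        · simp only [Fin.append_left, Pi.smul_apply]; simp
        · simp only [Fin.append_right, Pi.smul_apply]; simp }

/-- Left inverse of `splitL`. -/
noncomputable def joinL (m : ℕ) : (Fin (m + m) → ℝ) →L[ℝ] (Fin m → ℝ) :=
  LinearMap.toContinuousLinearMap
    { toFun := fun z i => z (Fin.castAdd m i) + z (Fin.natAdd m i)
      map_add' := by
        intro x y
        ext i
        simp only [Pi.add_apply]; ring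
      map_smul' := by
        intro c x
        ext i
        simp only [Pi.smul_apply, smul_eq_mul, RingHom.id_apply]; ring }

theorem joinL_splitL {m : ℕ} (S : Finset (Fin m)) (x : Fin m → ℝ) :
    joinL m (splitL S x) = x := by
  ext i
  simp only [joinL, splitL, LinearMap.coe_toContinuousLinearMap', LinearMap.coe_mk,
    AddHom.coe_mk, Fin.append_left, Fin.append_right]
  split_ifs <;> simp

theorem split_image {m : ℕ} (S : Finset (Fin m)) {Q R : Set (Fin m → ℝ)}
    (hQ : ∀ x ∈ Q, ∀ i, i ∉ S → x i = 0) (hR : ∀ x ∈ R, ∀ i, i ∈ S → x i = 0) :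
    splitL S '' (Q + R) = polyProd Q R := by
  have key : ∀ x ∈ Q, ∀ y ∈ R, splitL S (x + y) = Fin.append x y := by
    intro x hx y hy
    ext i
    simp only [splitL, LinearMap.coe_toContinuousLinearMap', LinearMap.coe_mk, AddHom.coe_mk]
    refine Fin.addCases (fun i => ?_) (fun i => ?_) i
    · simp only [Fin.append_left, Pi.add_apply]
      split_ifs with h
      · simp [hR y hy i h]
      · simp [hQ x hx i h]
    · simp only [Fin.append_right, Pi.add_apply]
      split_ifs with h
      · simp [hR y hy i h]
      · simp [hQ x hx i h]
  ext z
  constructor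
  · rintro ⟨_, ⟨x, hx, y, hy, rfl⟩, rfl⟩
    change splitL S (x + y) ∈ _
    rw [key x hx y hy]
    refine ⟨?_, ?_⟩
    · simpa using hx
    · simpa only [Fin.append_right] using hy
  · rintro ⟨h1, h2⟩
    refine ⟨_, Set.add_mem_add h1 h2, ?_⟩
    rw [key _ h1 _ h2]
    exact Fin.append_castAdd_natAdd

theorem am_negInd {m : ℕ} (S T : Finset (Fin m)) :
    am (negInd S) T = if T ⊆ S then T else T \ S := by
  ext i
  rw [mem_am]
  split_ifs with h
  · refine ⟨fun hi => hi.1, fun hi => ⟨hi, fun j hj => ?_⟩⟩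
    simp [negInd, h hi, h hj]
  · obtain ⟨j, hjT, hjS⟩ := Finset.not_subset.1 h
    rw [Finset.mem_sdiff]
    refine ⟨fun hi => ⟨hi.1, fun hiS => ?_⟩, fun hi => ⟨hi.1, fun k _ => ?_⟩⟩
    · have := hi.2 j hjT
      simp [negInd, hiS, hjS] at this
      linarith
    · simp only [negInd, hi.2, if_false]
      split_ifs <;> norm_num

theorem fc_negInd_prod {m : ℕ} {B : Finset (Finset (Fin m))} (hB : IsConnectedBuildingSet m B)
    {S : Finset (Fin m)} (hS : S ∈ B) (h1 : ∀ i, S ≠ {i}) (h2 : ∀ i, S ≠ {i}ᶜ)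
    (hne : S ≠ Finset.univ) {d : ℕ} {F : Set (Fin d → ℝ)}
    (hF : CombEquiv F (fc B (negInd S))) : ¬ Indecomposable F := by
  classical
  obtain ⟨p, hp⟩ := hB.nonempty_mem S hS
  obtain ⟨q, hq, hqp⟩ : ∃ q ∈ S, q ≠ p := by
    by_contra hcon
    push Not at hcon
    exact h1 p (Finset.eq_singleton_iff_unique_mem.2 ⟨hp, hcon⟩)
  obtain ⟨r, hr⟩ : ∃ j, j ∉ S := by
    by_contra hcon
    push Not at hcon
    exact hne (Finset.eq_univ_iff_forall.2 hcon)
  obtain ⟨s, hs, hsr⟩ : ∃ s, s ∉ S ∧ s ≠ r := by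
    by_contra hcon
    push Not at hcon
    refine h2 r (Finset.ext fun i => ?_)
    rw [Finset.mem_compl, Finset.mem_singleton]
    refine ⟨fun hi hir => hr (hir ▸ hi), fun hi => ?_⟩
    by_contra hiS
    exact hi (hcon i hiS)
  have hsplit : fc B (negInd S) = ∑ T ∈ B.filter (· ⊆ S), dl (id T) +
      ∑ T ∈ B.filter (fun T => ¬ T ⊆ S), dl (T \ S) := by
    rw [fc_eq hB.nonempty_mem, ← Finset.sum_filter_add_sum_filter_not B (· ⊆ S)]
    congr 1
    · refine Finset.sum_congr rfl fun T hT => ?_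
      rw [am_negInd, if_pos (Finset.mem_filter.1 hT).2, id]
    · refine Finset.sum_congr rfl fun T hT => ?_
      rw [am_negInd, if_neg (Finset.mem_filter.1 hT).2]
  intro hind
  refine hind ⟨m, m, _, _, sum_dl_polytope (B.filter (· ⊆ S)) id,
    sum_dl_polytope (B.filter (fun T => ¬ T ⊆ S)) (fun T => T \ S), ?_, ?_, ?_⟩
  · refine sum_dl_dim _ _ (fun T hT => hB.nonempty_mem T (Finset.mem_filter.1 hT).1)
      (T₀ := S) (Finset.mem_filter.2 ⟨hS, subset_rfl⟩) hp hq hqp.symm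
  · refine sum_dl_dim _ _ (fun T hT => ?_)
      (T₀ := Finset.univ) (Finset.mem_filter.2 ⟨hB.ground_mem, fun h => hr (h (Finset.mem_univ r))⟩)
      (p := r) (q := s) (by simp [hr]) (by simp [hs]) hsr.symm
    exact Finset.sdiff_nonempty.2 (Finset.mem_filter.1 hT).2
  · rw [← split_image S, ← hsplit]
    · exact hF.comp (combEquiv_image _ (joinL m) (joinL_splitL S) _)
    · intro x hx i hi
      exact sum_dl_supp (B.filter (· ⊆ S)) id (fun T hT h => hi ((Finset.mem_filter.1 hT).2 h)) hx
    · intro x hx i hi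
      exact sum_dl_supp (B.filter (fun T => ¬ T ⊆ S)) (fun T => T \ S)
        (fun T hT h => (Finset.mem_sdiff.1 h).2 hi) hx

theorem nest_polytope (m : ℕ) (B : Finset (Finset (Fin m))) : IsPolytope (nestohedron m B) :=
  sum_dl_polytope B id

/-- The functionals giving a complete flag of faces. -/
noncomputable def flagA {m : ℕ} (k : ℕ) : Fin m → ℝ := fun i => ((min (i : ℕ) k : ℕ) : ℝ)

theorem fc_flag_ssubset {m : ℕ} {B : Finset (Finset (Fin m))} (hB : IsConnectedBuildingSet m B)
    {k : ℕ} (hk : k + 1 < m) : fc B (flagA (k + 1)) ⊂ fc B (flagA k) := by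
  have hsub : fc B (flagA (k + 1)) ⊆ fc B (flagA k) := by
    refine fc_mono hB.nonempty_mem fun T hT i hi => ?_
    obtain ⟨hiT, h⟩ := mem_am.1 hi
    refine mem_am.2 ⟨hiT, fun j hj => ?_⟩
    have := h j hj
    simp only [flagA, Nat.cast_le] at this ⊢
    omega
  obtain ⟨x, hx, hx'⟩ := fc_strict hB.nonempty_mem hB.ground_mem (flagA k) (flagA (k + 1))
    (k := ⟨k, by omega⟩) (j := ⟨k + 1, hk⟩)
    (fun i => by simp only [flagA, Nat.cast_le]; omega)
    (by simp only [flagA, Nat.cast_lt]; omega)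
  exact (Set.ssubset_iff_of_subset hsub).2 ⟨x, hx, hx'⟩

/-- an indecomposable polytope of dimension `n` with at least `2n + 3`
indecomposable facets is not a nestohedron. -/
theorem not_nestohedron_of_many_indecomposable_facets (n d : ℕ)
    (P : Set (Fin d → ℝ)) (hpoly : IsPolytope P) (hdim : polyDim P = n)
    (hind : Indecomposable P)
    (hfac : 2 * n + 3 ≤
      {F : Set (Fin d → ℝ) | IsFacetOf F P ∧ Indecomposable F}.ncard) :
    ¬ ∃ (m : ℕ) (B : Finset (Finset (Fin m))),
        IsConnectedBuildingSet m B ∧ CombEquiv P (nestohedron m B) := by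
  classical
  rintro ⟨m, B, hB, ⟨φ⟩⟩
  have hnp := nest_polytope m B
  -- dimension bound
  have hm : m ≤ n + 1 := by
    let G : ℕ → {F : Set (Fin m → ℝ) // IsFaceOf F (nestohedron m B)} :=
      fun k => ⟨fc B (flagA k), fc_face hB.nonempty_mem _⟩
    have hD : ∀ k, k < m → polyDim (φ.symm (G k)).1 + k ≤ n := by
      intro k
      induction k with
      | zero =>
        intro _
        rw [← hdim, add_zero]
        unfold polyDim
        rw [direction_affineSpan, direction_affineSpan]
        exact Submodule.finrank_mono (vectorSpan_mono ℝ (face_sub (φ.symm (G 0)).2))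
      | succ k ih =>
        intro hk
        have h1 := ih (by omega)
        have hlt : G (k + 1) < G k := fc_flag_ssubset hB hk
        have hlt2 : φ.symm (G (k + 1)) < φ.symm (G k) := φ.symm.lt_iff_lt.2 hlt
        have := polyDim_lt (φ.symm (G (k + 1))).2 (φ.symm (G k)).2 hlt2
        omega
    rcases Nat.eq_zero_or_pos m with h0 | h0
    · omega
    · have := hD (m - 1) (by omega)
      omega
  -- the finite set of candidate facets
  let 𝒢 : Finset (Set (Fin m → ℝ)) :=
    (Finset.univ.image fun i : Fin m => fc B (negInd {i})) ∪
      (Finset.univ.image fun i : Fin m => fc B (negInd {i}ᶜ))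
  have hcard : 𝒢.card ≤ 2 * m := by
    refine (Finset.card_union_le _ _).trans ?_
    have h1 := Finset.card_image_le (s := Finset.univ) (f := fun i : Fin m => fc B (negInd {i}))
    have h2 := Finset.card_image_le (s := Finset.univ) (f := fun i : Fin m => fc B (negInd {i}ᶜ))
    rw [Finset.card_univ, Fintype.card_fin] at h1 h2
    omega
  let f : Set (Fin d → ℝ) → Set (Fin m → ℝ) :=
    fun F => if h : IsFaceOf F P then (φ ⟨F, h⟩).1 else ∅
  have hle : {F : Set (Fin d → ℝ) | IsFacetOf F P ∧ Indecomposable F}.ncard ≤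
      (𝒢 : Set (Set (Fin m → ℝ))).ncard := by
    refine Set.ncard_le_ncard_of_injOn f ?_ ?_ (Finset.finite_toSet _)
    · rintro F ⟨⟨hF, hFd⟩, hFi⟩
      have hfF : f F = (φ ⟨F, hF⟩).1 := dif_pos hF
      rw [hfF]
      have hPP : IsFaceOf P P := face_self (hF.1.mono (face_sub hF))
      have hN : IsFaceOf (nestohedron m B) (nestohedron m B) :=
        face_self ((φ ⟨F, hF⟩).2.1.mono (face_sub (φ ⟨F, hF⟩).2))
      have hsymN : φ.symm ⟨_, hN⟩ = ⟨P, hPP⟩ := by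
        refine le_antisymm (face_sub (φ.symm ⟨_, hN⟩).2) ?_
        rw [OrderIso.le_symm_apply]
        exact face_sub (φ ⟨P, hPP⟩).2
      have hneq : (φ ⟨F, hF⟩).1 ≠ nestohedron m B := by
        intro h
        have h' : φ ⟨F, hF⟩ = ⟨_, hN⟩ := Subtype.ext h
        rw [← OrderIso.eq_symm_apply, hsymN] at h'
        have h'' : F = P := congrArg Subtype.val h'
        rw [h''] at hFd
        omega
      obtain ⟨S, hSB, hSu, hsub⟩ := proper_face_sub hB (φ ⟨F, hF⟩).2 hneq
      let M : {F : Set (Fin m → ℝ) // IsFaceOf F (nestohedron m B)} :=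
        ⟨fc B (negInd S), fc_face hB.nonempty_mem _⟩
      have hleM : (⟨F, hF⟩ : {F : Set (Fin d → ℝ) // IsFaceOf F P}) ≤ φ.symm M := by
        rw [OrderIso.le_symm_apply]
        exact hsub
      have heq : φ ⟨F, hF⟩ = M := by
        rw [← OrderIso.eq_symm_apply]
        by_contra hne
        have hlt := lt_of_le_of_ne hleM hne
        have d1 := polyDim_lt hF (φ.symm M).2 hlt
        have hMP : φ.symm M ≠ ⟨P, hPP⟩ := by
          rw [← hsymN]
          intro h
          exact fc_negInd_ne hB hSB hSu (congrArg Subtype.val (φ.symm.injective h))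
        have hlt2 : φ.symm M < ⟨P, hPP⟩ := lt_of_le_of_ne (face_sub (φ.symm M).2) hMP
        have d2 := polyDim_lt (φ.symm M).2 hPP hlt2
        omega
      have hce : CombEquiv F (fc B (negInd S)) := by
        have := combEquiv_face hpoly hnp φ ⟨F, hF⟩
        rw [heq] at this
        exact this
      rw [heq]
      change fc B (negInd S) ∈ 𝒢
      by_contra hcon
      refine fc_negInd_prod hB hSB (fun i hi => hcon ?_) (fun i hi => hcon ?_) hSu hce hFi
      · exact Finset.mem_union_left _ (Finset.mem_image.2 ⟨i, Finset.mem_univ _, by rw [hi]⟩)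
      · exact Finset.mem_union_right _ (Finset.mem_image.2 ⟨i, Finset.mem_univ _, by rw [hi]⟩)
    · rintro F ⟨⟨hF, _⟩, _⟩ F' ⟨⟨hF', _⟩, _⟩ h
      have h1 : f F = (φ ⟨F, hF⟩).1 := dif_pos hF
      have h2 : f F' = (φ ⟨F', hF'⟩).1 := dif_pos hF'
      rw [h1, h2] at h
      exact congrArg Subtype.val (φ.injective (Subtype.ext h))
  rw [Set.ncard_coe_finset] at hle
  omega

end GalD
end
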